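/- arXiv:2409.13553 — 6 statements merged into one kernel-verified Lean document; each statement's English description precedes it below -/
import Mathlib

section
/- Let F be an infinite field, let u > r ≥ 2 be integers, and let 1 ≤ k ≤ r−1 and 1 ≤ l ≤ u−r. Then the ideal generated by the set of polynomials E^Q_{k,l} in the polynomial ring F[a_1,…,a_{u−1}, b_1,…,b_{u−r−1}, g_0,…,g_{u−r−1}, h_0,…,h_{u−r−1}] is a prime ideal. -/
open Polynomial

noncomputable section

/-- The quotient module `F[t]/(t^m)`. -/
abbrev PQ (F : Type*) [Field F] (m : ℕ) : Type _ := F[X] ⧸ Ideal.span {(X : F[X]) ^ m}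

variable (F : Type*) [Field F]

lemma mulQ_cond (m m' : ℕ) (c : F[X]) (h : (X : F[X]) ^ m' ∣ c * X ^ m) :
    Ideal.span {(X : F[X]) ^ m} ≤
      Submodule.comap (LinearMap.mulLeft F[X] c) (Ideal.span {(X : F[X]) ^ m'}) := by
  rw [Ideal.span_le]
  intro x hx
  rw [Set.mem_singleton_iff] at hx
  subst hx
  simp only [SetLike.mem_coe, Submodule.mem_comap, LinearMap.mulLeft_apply]
  exact Ideal.mem_span_singleton.mpr h

/-- The `F`-linear map `F[t]/(t^m) → F[t]/(t^{m'})` induced by multiplication by the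
polynomial `c`, well-defined whenever `t^{m'} ∣ c · t^m`. -/
def mulQ (m m' : ℕ) (c : F[X]) (h : (X : F[X]) ^ m' ∣ c * X ^ m) :
    PQ F m →ₗ[F] PQ F m' :=
  LinearMap.restrictScalars F
    (Submodule.mapQ (Ideal.span {(X : F[X]) ^ m}) (Ideal.span {(X : F[X]) ^ m'})
      (LinearMap.mulLeft F[X] c) (mulQ_cond F m m' c h))

lemma dvd_A (u : ℕ) (c : F[X]) : (X : F[X]) ^ u ∣ c * X ^ u := Dvd.intro c (mul_comm _ _)

lemma dvd_G (u r : ℕ) (hru : r ≤ u) (g : F[X]) :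
    (X : F[X]) ^ u ∣ (X ^ r * g) * X ^ (u - r) := by
  refine Dvd.intro g ?_
  rw [mul_comm ((X:F[X])^r) g, mul_assoc, ← pow_add, Nat.add_sub_cancel' hru, mul_comm]

lemma dvd_H (u r : ℕ) (h : F[X]) : (X : F[X]) ^ (u - r) ∣ h * X ^ u :=
  Dvd.dvd.mul_left (pow_dvd_pow _ (Nat.sub_le u r)) h

/-- The `F[t]`-module endomorphism of `V = F[t]/(t^u) ⊕ t^r·F[t]/(t^u)` given by
`M(v₁, v₂) = (a v₁ + g v₂, h t^r v₁ + b v₂)`, where the second summand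
`t^r·F[t]/(t^u)` is identified with `F[t]/(t^{u-r})` via `w ↦ t^r w`
(so the lower-left entry becomes `v₁ ↦ h v₁ mod t^{u-r}` and the upper-right
entry becomes `w ↦ t^r g w mod t^u`). -/
def Mmap (u r : ℕ) (hru : r ≤ u) (a g h b : F[X]) :
    (PQ F u × PQ F (u - r)) →ₗ[F] (PQ F u × PQ F (u - r)) :=
  LinearMap.prod
    ((mulQ F u u a (dvd_A F u a)).comp (LinearMap.fst F (PQ F u) (PQ F (u - r))) +
      (mulQ F (u - r) u (X ^ r * g) (dvd_G F u r hru g)).comp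
        (LinearMap.snd F (PQ F u) (PQ F (u - r))))
    ((mulQ F u (u - r) h (dvd_H F u r h)).comp (LinearMap.fst F (PQ F u) (PQ F (u - r))) +
      (mulQ F (u - r) (u - r) b (dvd_A F (u - r) b)).comp
        (LinearMap.snd F (PQ F u) (PQ F (u - r))))

/-- `B` has Jordan type `P` (a partition given as the multiset of its parts):
the corank of every power of `B` is the one prescribed by `P`, i.e.
`dim ker (B^s) = Σ_i min(pᵢ, s)` for all `s ≥ 0`. -/
def JordanTypeIs {V : Type*} [AddCommGroup V] [Module F V] (B : Module.End F V)
    (P : Multiset ℕ) : Prop :=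
  ∀ s : ℕ, Module.finrank F (LinearMap.ker (B ^ s)) = (P.map fun p => min p s).sum

/-- Index type for the `N = 4u-3r-2` coordinates
`(a_1,…,a_{u−1}, b_1,…,b_{u−r−1}, g_0,…,g_{u−r−1}, h_0,…,h_{u−r−1})`. -/
abbrev Vars (u r : ℕ) : Type := Fin (u - 1) ⊕ Fin (u - r - 1) ⊕ Fin (u - r) ⊕ Fin (u - r)

/-- `a = Σ_{i=1}^{u−1} a_i t^i`. -/
def paOf (u r : ℕ) (x : Vars u r → F) : F[X] :=
  ∑ i : Fin (u - 1), C (x (Sum.inl i)) * X ^ ((i : ℕ) + 1)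

/-- `b = Σ_{i=1}^{u−r−1} b_i t^i`. -/
def pbOf (u r : ℕ) (x : Vars u r → F) : F[X] :=
  ∑ i : Fin (u - r - 1), C (x (Sum.inr (Sum.inl i))) * X ^ ((i : ℕ) + 1)

/-- `g = Σ_{i=0}^{u−r−1} g_i t^i`. -/
def pgOf (u r : ℕ) (x : Vars u r → F) : F[X] :=
  ∑ i : Fin (u - r), C (x (Sum.inr (Sum.inr (Sum.inl i)))) * X ^ (i : ℕ)

/-- `h = Σ_{i=0}^{u−r−1} h_i t^i`. -/
def phOf (u r : ℕ) (x : Vars u r → F) : F[X] :=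
  ∑ i : Fin (u - r), C (x (Sum.inr (Sum.inr (Sum.inr i)))) * X ^ (i : ℕ)

/-- The nilpotent endomorphism `M_x` of `V` determined by the point `x ∈ F^N`. -/
def Mx (u r : ℕ) (hru : r ≤ u) (x : Vars u r → F) :
    Module.End F (PQ F u × PQ F (u - r)) :=
  Mmap F u r hru (paOf F u r x) (pgOf F u r x) (phOf F u r x) (pbOf F u r x)

/-- The variable `a_i` as a polynomial function on `F^N` (meaningful for `1 ≤ i ≤ u-1`). -/
def Av (u r : ℕ) (i : ℕ) : MvPolynomial (Vars u r) F :=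
  if h : i - 1 < u - 1 then MvPolynomial.X (Sum.inl ⟨i - 1, h⟩) else 0

/-- The variable `b_i` as a polynomial function on `F^N` (meaningful for `1 ≤ i ≤ u-r-1`). -/
def Bv (u r : ℕ) (i : ℕ) : MvPolynomial (Vars u r) F :=
  if h : i - 1 < u - r - 1 then MvPolynomial.X (Sum.inr (Sum.inl ⟨i - 1, h⟩)) else 0

/-- The variable `g_i` as a polynomial function on `F^N` (meaningful for `0 ≤ i ≤ u-r-1`). -/
def Gv (u r : ℕ) (i : ℕ) : MvPolynomial (Vars u r) F :=
  if h : i < u - r then MvPolynomial.X (Sum.inr (Sum.inr (Sum.inl ⟨i, h⟩))) else 0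

/-- The variable `h_i` as a polynomial function on `F^N` (meaningful for `0 ≤ i ≤ u-r-1`). -/
def Hv (u r : ℕ) (i : ℕ) : MvPolynomial (Vars u r) F :=
  if h : i < u - r then MvPolynomial.X (Sum.inr (Sum.inr (Sum.inr ⟨i, h⟩))) else 0

/-- The set of polynomials `E^Q_{k,l}` for `Q = (u, u-r)`:
`{a_1,…,a_{k−1}, b_1,…,b_{l−1}}` if `k+l ≤ r`, and
`{a_1,…,a_{k−1}, b_1,…,b_{r−k−1}}` together with the quadratic polynomials
`Σ_{j=0}^{m} a_{k+j} b_{r−k+m−j} − Σ_{j=0}^{m} g_j h_{m−j}` for `0 ≤ m ≤ k+l−r−1`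
if `k+l ≥ r+1`. -/
def Eset (u r k l : ℕ) : Set (MvPolynomial (Vars u r) F) :=
  if k + l ≤ r then
    {p | ∃ i, 1 ≤ i ∧ i ≤ k - 1 ∧ p = Av F u r i} ∪
      {p | ∃ i, 1 ≤ i ∧ i ≤ l - 1 ∧ p = Bv F u r i}
  else
    {p | ∃ i, 1 ≤ i ∧ i ≤ k - 1 ∧ p = Av F u r i} ∪
      {p | ∃ i, 1 ≤ i ∧ i ≤ r - k - 1 ∧ p = Bv F u r i} ∪
      {p | ∃ m, m ≤ k + l - r - 1 ∧ p =
        (∑ j ∈ Finset.range (m + 1), Av F u r (k + j) * Bv F u r (r - k + m - j)) -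
          (∑ j ∈ Finset.range (m + 1), Gv F u r j * Hv F u r (m - j))}

/-- The common zero locus in `F^N` of a set `T` of polynomials. -/
def zLocus (u r : ℕ) (T : Set (MvPolynomial (Vars u r) F)) : Set (Vars u r → F) :=
  {x | ∀ p ∈ T, MvPolynomial.eval x p = 0}

/-- `X^Q_{k,l}`, the common zero locus of `E^Q_{k,l}`. -/
def Xlocus (u r k l : ℕ) : Set (Vars u r → F) := zLocus F u r (Eset F u r k l)

/-- Zariski-closed subsets of `F^N`: common zero loci of sets of polynomials. -/
def IsZClosed (u r : ℕ) (S : Set (Vars u r → F)) : Prop :=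
  ∃ T : Set (MvPolynomial (Vars u r) F), S = zLocus F u r T

/-- The Zariski closure of a subset of `F^N`. -/
def zClosure (u r : ℕ) (S : Set (Vars u r → F)) : Set (Vars u r → F) :=
  ⋂₀ {C | IsZClosed F u r C ∧ S ⊆ C}

end

section Burge

/-- Scanning the frequency sequence `f` downward from `j`, forming backward pairs:
whenever `f j > 0` (and `j` has not been consumed by a previously formed pair),
put `j` in the set and consume the index `j - 1`. -/
def RsetGo (f : ℕ → ℕ) : ℕ → Finset ℕ
  | 0 => ∅
  | 1 => if 0 < f 1 then {1} else ∅
  | (j + 2) => if 0 < f (j + 2) then insert (j + 2) (RsetGo f j) else RsetGo f (j + 1)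

/-- The set `R(P)` of a partition `P` (given as the multiset of its parts, with
frequency sequence `j ↦ P.count j`); the scan starts at the largest part `P.sup`. -/
def Rset (P : Multiset ℕ) : Finset ℕ := RsetGo (fun j => P.count j) P.sup

/-- The partition `∂P`: for each `j ∈ R(P)` one copy of the part `j` is replaced by
`j - 1` (discarded when `j - 1 = 0`). -/
def dP (P : Multiset ℕ) : Multiset ℕ :=
  (P - (Rset P).val) + (((Rset P).val.map fun j => j - 1).filter fun j => 0 < j)

/-- Fuel-driven computation of the Burge code; `false` stands for `α`, `true` for `β`.
(The fuel `P.sum + 1` used in `burgeCode` always suffices, since `∂` strictly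
decreases the size of a nonempty partition.) -/
def burgeGo : ℕ → Multiset ℕ → List Bool
  | 0, _ => []
  | (n + 1), P =>
    if P = 0 then [false]
    else (if 1 ∈ Rset P then true else false) :: burgeGo n (dP P)

/-- The Burge code of the partition `P`: the word `w_1 ⋯ w_m` with `w_i = β` (`true`)
if `∂^{i-1} P` is in class `B` (i.e. `1 ∈ R(∂^{i-1}P)`) and `w_i = α` (`false`)
otherwise, where `m = min { i : ∂^{i-1} P = (0) }`. -/
def burgeCode (P : Multiset ℕ) : List Bool := burgeGo (P.sum + 1) P

/-- The almost rectangular partition `[m]^k` of `m` into `k` parts, each equal to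
`⌈m/k⌉` or `⌊m/k⌋`. -/
def arPart (m k : ℕ) : Multiset ℕ :=
  Multiset.replicate (m % k) (m / k + 1) + Multiset.replicate (k - m % k) (m / k)

/-- Greedy decomposition of a weakly decreasing list of parts into maximal
almost rectangular segments from the top (fuel-driven helper). -/
def greedyGo : ℕ → List ℕ → List (List ℕ)
  | 0, _ => []
  | _ + 1, [] => []
  | n + 1, p :: rest =>
    ((p :: rest).takeWhile fun q => decide (p ≤ q + 1)) ::
      greedyGo n ((p :: rest).dropWhile fun q => decide (p ≤ q + 1))

/-- The greedy decomposition of a weakly decreasing list of parts into maximal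
almost rectangular subpartitions from the top. -/
def greedy (l : List ℕ) : List (List ℕ) := greedyGo l.length l

end Burge


section JetPrime

open MvPolynomial

variable {F : Type*} [Field F] {σ : Type*}

/-- All monomials of `p` have weight less than `D`. -/
def WLt (w : σ → ℕ) (p : MvPolynomial σ F) (D : ℕ) : Prop :=
  ∀ d ∈ p.support, Finsupp.weight w d < D

lemma WLt.add {w : σ → ℕ} {p q : MvPolynomial σ F} {D : ℕ} (hp : WLt w p D) (hq : WLt w q D) :
    WLt w (p + q) D := by
  classical
  intro d hd
  rcases Finset.mem_union.1 (MvPolynomial.support_add hd) with h | h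
  · exact hp d h
  · exact hq d h

lemma WLt.mul {w : σ → ℕ} {p q : MvPolynomial σ F} {D E : ℕ} (hp : WLt w p (D + 1))
    (hq : WLt w q E) : WLt w (p * q) (D + E) := by
  classical
  intro d hd
  obtain ⟨a, ha, b, hb, rfl⟩ := Finset.mem_add.1 (MvPolynomial.support_mul p q hd)
  have h1 := hp a ha
  have h2 := hq b hb
  rw [map_add]
  omega

lemma WLt.mono {w : σ → ℕ} {p : MvPolynomial σ F} {D E : ℕ} (hp : WLt w p D) (h : D ≤ E) :
    WLt w p E := fun d hd => (hp d hd).trans_le h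

lemma WLt.smul {w : σ → ℕ} {p : MvPolynomial σ F} {D : ℕ} (c : F) (hp : WLt w p D) :
    WLt w (c • p) D := fun d hd => hp d (MvPolynomial.support_smul hd)

lemma WLt.zero (w : σ → ℕ) (D : ℕ) : WLt w (0 : MvPolynomial σ F) D := by
  intro d hd; simp at hd

lemma WLt.neg {w : σ → ℕ} {p : MvPolynomial σ F} {D : ℕ} (hp : WLt w p D) :
    WLt w (-p) D := fun d hd => hp d (by rwa [MvPolynomial.support_neg] at hd)

lemma WLt.sum {w : σ → ℕ} {D : ℕ} {κ : Type*} (s : Finset κ) (p : κ → MvPolynomial σ F)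
    (hp : ∀ i ∈ s, WLt w (p i) D) : WLt w (∑ i ∈ s, p i) D := by
  classical
  induction s using Finset.induction_on with
  | empty => simpa using WLt.zero w D
  | insert a s ha ih =>
    rw [Finset.sum_insert ha]
    exact (hp a (by simp)).add (ih fun i hi => hp i (by simp [hi]))

lemma WLt.eq_zero {w : σ → ℕ} {p : MvPolynomial σ F} (hp : WLt w p 0) : p = 0 := by
  rw [← MvPolynomial.support_eq_empty]
  refine Finset.eq_empty_of_forall_notMem fun d hd => ?_
  exact absurd (hp d hd) (by omega)

lemma WLt.monomial (w : σ → ℕ) (d : σ →₀ ℕ) (c : F) :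
    WLt w (monomial d c) (Finsupp.weight w d + 1) := by
  intro e he
  rw [Finset.mem_singleton.1 (MvPolynomial.support_monomial_subset he)]
  omega

lemma exists_WLt (w : σ → ℕ) (p : MvPolynomial σ F) : ∃ D, WLt w p D :=
  ⟨p.support.sup (Finsupp.weight w) + 1, fun d hd => by
    have := Finset.le_sup (f := fun d => Finsupp.weight w d) hd
    exact Nat.lt_succ_of_le this⟩

/-- `p` is monic with leading monomial `d`. -/
def WLead (w : σ → ℕ) (p : MvPolynomial σ F) (d : σ →₀ ℕ) : Prop :=
  WLt w (p - monomial d 1) (Finsupp.weight w d)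

lemma WLead.monomial (w : σ → ℕ) (d : σ →₀ ℕ) :
    WLead w (MvPolynomial.monomial d (1 : F)) d := by
  unfold WLead; rw [sub_self]; exact WLt.zero _ _

lemma WLead.mul {w : σ → ℕ} {p q : MvPolynomial σ F} {d e : σ →₀ ℕ} (hp : WLead w p d)
    (hq : WLead w q e) : WLead w (p * q) (d + e) := by
  unfold WLead at *
  have h1 := (WLt.monomial w d (1 : F)).mul hq
  have h2 := (WLt.monomial w e (1 : F)).mul hp
  have h3 := (hp.mono (Nat.le_succ _)).mul hq
  rw [map_add]
  rw [add_comm] at h2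
  have : p * q - MvPolynomial.monomial (d + e) 1 = MvPolynomial.monomial d 1 * (q - MvPolynomial.monomial e 1)
    + MvPolynomial.monomial e 1 * (p - MvPolynomial.monomial d 1) + (p - MvPolynomial.monomial d 1) * (q - MvPolynomial.monomial e 1) := by
    have : MvPolynomial.monomial (d + e) (1 : F) = MvPolynomial.monomial d 1 * MvPolynomial.monomial e 1 := by
      rw [MvPolynomial.monomial_mul, one_mul]
    rw [this]; ring
  rw [this]
  exact (h1.add h2).add h3

lemma WLead.pow {w : σ → ℕ} {p : MvPolynomial σ F} {d : σ →₀ ℕ} (hp : WLead w p d) (n : ℕ) :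
    WLead w (p ^ n) (n • d) := by
  induction n with
  | zero => simpa using WLead.monomial (F := F) w 0
  | succ n ih => rw [pow_succ, succ_nsmul]; exact ih.mul hp

lemma WLead.prod {w : σ → ℕ} {κ : Type*} (s : Finset κ) (p : κ → MvPolynomial σ F)
    (d : κ → σ →₀ ℕ) (hp : ∀ i, WLead w (p i) (d i)) :
    WLead w (∏ i ∈ s, p i) (∑ i ∈ s, d i) := by
  classical
  induction s using Finset.induction_on with
  | empty => simpa using WLead.monomial (F := F) w 0
  | insert a s ha ih => rw [Finset.prod_insert ha, Finset.sum_insert ha]; exact (hp a).mul ih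

/-- A linear map that is unitriangular for the weight filtration is bijective. -/
lemma unitri_bijective (w : σ → ℕ) (Φ : MvPolynomial σ F →ₗ[F] MvPolynomial σ F)
    (h : ∀ d, WLead w (Φ (monomial d 1)) d) : Function.Bijective Φ := by
  have key : ∀ D (p : MvPolynomial σ F), WLt w p (D + 1) → WLt w (Φ p - p) D := by
    intro D p hp
    have : Φ p - p = ∑ d ∈ p.support, coeff d p • (Φ (monomial d 1) - monomial d 1) := by
      conv_lhs => rw [p.as_sum]
      rw [map_sum, ← Finset.sum_sub_distrib]
      refine Finset.sum_congr rfl fun d _ => ?_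
      have : monomial d (coeff d p) = coeff d p • monomial d (1 : F) := by
        rw [MvPolynomial.smul_monomial, smul_eq_mul, mul_one]
      rw [this, map_smul, smul_sub]
    rw [this]
    refine WLt.sum _ _ fun d hd => WLt.smul _ ((h d).mono ?_)
    have := hp d hd
    omega
  constructor
  · rw [injective_iff_map_eq_zero]
    intro p hp
    obtain ⟨D, hD⟩ := exists_WLt w p
    induction D with
    | zero => exact hD.eq_zero
    | succ D ih =>
      apply ih
      have := (key D p hD).neg
      simpa [hp] using this
  · intro p
    obtain ⟨D, hD⟩ := exists_WLt w p
    induction D generalizing p with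
    | zero => exact ⟨0, by rw [hD.eq_zero, map_zero]⟩
    | succ D ih =>
      obtain ⟨q, hq⟩ := ih _ (key D p hD)
      exact ⟨p - q, by rw [map_sub, hq]; abel⟩

section nzd
variable {ι : Type*} [Fintype ι] (p q : ι → σ)

/-- leading monomial -/
noncomputable def lmon (i : ι) : σ →₀ ℕ := Finsupp.single (p i) 1 ⊔ Finsupp.single (q i) 1

/-- exponent of the leading monomial -/
def lexp (i : ι) (d : σ →₀ ℕ) : ℕ := min (d (p i)) (d (q i))

/-- product of leading monomials dividing `d` -/
noncomputable def ltot (d : σ →₀ ℕ) : σ →₀ ℕ := ∑ i, lexp p q i d • lmon p q i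

/-- the straightening map -/
noncomputable def PhiF (f : ι → MvPolynomial σ F) : MvPolynomial σ F →ₗ[F] MvPolynomial σ F :=
  (MvPolynomial.basisMonomials σ F).constr F
    (fun d => (∏ i, f i ^ lexp p q i d) * monomial (d - ltot p q d) 1)

lemma PhiF_monomial (f : ι → MvPolynomial σ F) (d : σ →₀ ℕ) :
    PhiF p q f (monomial d 1) =
      (∏ i, f i ^ lexp p q i d) * monomial (d - ltot p q d) 1 := by
  have := (MvPolynomial.basisMonomials σ F).constr_basis F
    (fun d => (∏ i, f i ^ lexp p q i d) * monomial (d - ltot p q d) 1) d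
  simpa [PhiF] using this

variable (hpq : ∀ i j, i ≠ j → p i ≠ p j ∧ p i ≠ q j ∧ q i ≠ q j)
include hpq

lemma ltot_le (d : σ →₀ ℕ) : ltot p q d ≤ d := by
  classical
  intro s
  by_cases hs : ∃ i, s = p i ∨ s = q i
  · obtain ⟨i, hi⟩ := hs
    have h0 : ltot p q d s = lexp p q i d * lmon p q i s := by
      unfold ltot
      rw [Finsupp.finsetSum_apply, Finset.sum_eq_single i]
      · simp
      · intro j _ hj
        have h1 := hpq i j (Ne.symm hj)
        have h2 := hpq j i hj
        rcases hi with rfl | rfl <;> simp [lmon, Finsupp.single_apply, h1, h2, Ne.symm h1.1, Ne.symm h1.2.2]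
      · simp
    rw [h0]
    have h2 : lmon p q i s ≤ 1 := by
      unfold lmon
      rw [Finsupp.sup_apply, Finsupp.single_apply, Finsupp.single_apply]
      split_ifs <;> simp
    have h3 : lexp p q i d ≤ d s := by
      unfold lexp; rcases hi with rfl | rfl
      · exact min_le_left _ _
      · exact min_le_right _ _
    nlinarith
  · push Not at hs
    have : ltot p q d s = 0 := by
      unfold ltot
      rw [Finsupp.finsetSum_apply]
      refine Finset.sum_eq_zero fun i _ => ?_
      have := hs i
      simp [lmon, Finsupp.single_apply, Ne.symm this.1, Ne.symm this.2]
    omega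

lemma lexp_add_lmon [DecidableEq ι] (i j : ι) (d : σ →₀ ℕ) :
    lexp p q i (d + lmon p q j) = lexp p q i d + if i = j then 1 else 0 := by
  classical
  unfold lexp lmon
  simp only [Finsupp.add_apply, Finsupp.sup_apply, Finsupp.single_apply]
  by_cases h : i = j
  · subst h; simp only [if_true]; split_ifs <;> simp
  · have h1 := hpq i j h
    have h2 := hpq j i (Ne.symm h)
    simp [h, h2, Ne.symm h1.2.1]

omit hpq in
lemma lexp_add_b (b : σ) (hb : ∀ i, b ≠ p i ∧ b ≠ q i) (i : ι) (d : σ →₀ ℕ) :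
    lexp p q i (d + Finsupp.single b 1) = lexp p q i d := by
  classical
  unfold lexp
  simp [Finsupp.single_apply, hb i]

lemma PhiF_mul_f (f : ι → MvPolynomial σ F) (j : ι) (g : MvPolynomial σ F) :
    PhiF p q f (monomial (lmon p q j) 1 * g) = f j * PhiF p q f g := by
  classical
  have : (PhiF p q f) ∘ₗ (LinearMap.mulLeft F (monomial (lmon p q j) (1 : F))) =
      (LinearMap.mulLeft F (f j)) ∘ₗ (PhiF p q f) := by
    refine (MvPolynomial.basisMonomials σ F).ext fun d => ?_
    simp only [MvPolynomial.coe_basisMonomials, LinearMap.comp_apply, LinearMap.mulLeft_apply, MvPolynomial.monomial_mul,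
      one_mul, PhiF_monomial]
    have h1 : ltot p q (lmon p q j + d) = lmon p q j + ltot p q d := by
      unfold ltot
      simp_rw [add_comm (lmon p q j) d, lexp_add_lmon p q hpq, add_smul]
      rw [Finset.sum_add_distrib]
      simp [ite_smul, add_comm]
    rw [h1, add_tsub_add_eq_tsub_left]
    simp_rw [add_comm (lmon p q j) d, lexp_add_lmon p q hpq, pow_add, Finset.prod_mul_distrib]
    simp [pow_ite]
    ring
  exact LinearMap.congr_fun this g

lemma PhiF_mul_b (f : ι → MvPolynomial σ F) (b : σ) (hb : ∀ i, b ≠ p i ∧ b ≠ q i)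
    (g : MvPolynomial σ F) :
    PhiF p q f (X b * g) = X b * PhiF p q f g := by
  classical
  have : (PhiF p q f) ∘ₗ (LinearMap.mulLeft F (monomial (Finsupp.single b 1) (1 : F))) =
      (LinearMap.mulLeft F (X b)) ∘ₗ (PhiF p q f) := by
    refine (MvPolynomial.basisMonomials σ F).ext fun d => ?_
    simp only [MvPolynomial.coe_basisMonomials, LinearMap.comp_apply, LinearMap.mulLeft_apply, MvPolynomial.monomial_mul,
      one_mul, PhiF_monomial]
    have h1 : ltot p q (Finsupp.single b 1 + d) = ltot p q d := by
      unfold ltot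
      simp_rw [add_comm _ d, lexp_add_b p q b hb]
    rw [h1, add_tsub_assoc_of_le (ltot_le p q hpq d)]
    simp_rw [add_comm _ d, lexp_add_b p q b hb]
    rw [← one_mul (1 : F), ← MvPolynomial.monomial_mul, one_mul]
    change _ = X b * _
    rw [MvPolynomial.X]; ring
  exact LinearMap.congr_fun this g

/-- The variable `b` is a nonzerodivisor modulo polynomials with coprime leading monomials
not involving `b`. -/
lemma nzd_of_coprime_lead (w : σ → ℕ) (f : ι → MvPolynomial σ F)
    (hf : ∀ i, WLead w (f i) (lmon p q i)) (b : σ) (hb : ∀ i, b ≠ p i ∧ b ≠ q i)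
    (g : MvPolynomial σ F) (hg : X b * g ∈ Ideal.span (Set.range f)) :
    g ∈ Ideal.span (Set.range f) := by
  classical
  have hbij : Function.Bijective (PhiF p q f) := by
    refine unitri_bijective w _ fun d => ?_
    rw [PhiF_monomial]
    have h := (WLead.prod (w := w) Finset.univ (fun i => f i ^ lexp p q i d)
      (fun i => lexp p q i d • lmon p q i) (fun i => (hf i).pow _)).mul
      (WLead.monomial (F := F) w (d - ltot p q d))
    have e : (∑ i, lexp p q i d • lmon p q i) + (d - ltot p q d) = d :=
      add_tsub_cancel_of_le (ltot_le p q hpq d)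
    rwa [e] at h
  -- elements of the ideal are images of the monomial ideal
  have hI : ∀ y ∈ Ideal.span (Set.range f), ∃ x, y = PhiF p q f x ∧
      ∀ d ∈ x.support, ∃ i, 0 < lexp p q i d := by
    intro y hy
    obtain ⟨c, rfl⟩ := (Ideal.mem_span_range_iff_exists_fun).1 hy
    choose c' hc' using fun i => hbij.2 (c i)
    refine ⟨∑ i, monomial (lmon p q i) 1 * c' i, ?_, ?_⟩
    · rw [map_sum]
      refine Finset.sum_congr rfl fun i _ => ?_
      rw [PhiF_mul_f p q hpq, hc', mul_comm]
    · intro d hd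
      obtain ⟨i, _, hi⟩ := Finset.mem_biUnion.1 (MvPolynomial.support_sum hd)
      obtain ⟨a, ha, e, _, rfl⟩ := Finset.mem_add.1 (MvPolynomial.support_mul _ _ hi)
      rw [Finset.mem_singleton.1 (MvPolynomial.support_monomial_subset ha)]
      refine ⟨i, ?_⟩
      rw [add_comm, lexp_add_lmon p q hpq]
      simp
  obtain ⟨x, rfl⟩ := hbij.2 g
  obtain ⟨y, hy, hyd⟩ := hI _ hg
  rw [← PhiF_mul_b p q hpq f b hb] at hy
  have hxy := hbij.1 hy
  have hx : ∀ d ∈ x.support, ∃ i, 0 < lexp p q i d := by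
    intro d hd
    have h1 : d + Finsupp.single b 1 ∈ y.support := by
      rw [← hxy, MvPolynomial.mem_support_iff, add_comm, MvPolynomial.coeff_X_mul]
      exact MvPolynomial.mem_support_iff.1 hd
    obtain ⟨i, hi⟩ := hyd _ h1
    exact ⟨i, by rwa [lexp_add_b p q b hb] at hi⟩
  rw [x.as_sum, map_sum]
  refine Ideal.sum_mem _ fun d hd => ?_
  have : monomial d (coeff d x) = coeff d x • monomial d (1 : F) := by
    rw [MvPolynomial.smul_monomial, smul_eq_mul, mul_one]
  rw [this, map_smul, PhiF_monomial, MvPolynomial.smul_eq_C_mul]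
  obtain ⟨i, hi⟩ := hx d hd
  refine Ideal.mul_mem_left _ _ (Ideal.mul_mem_right _ _ ?_)
  refine Ideal.mem_of_dvd _ (Finset.dvd_prod_of_mem _ (Finset.mem_univ i)) ?_
  exact Ideal.pow_mem_of_mem _ (Ideal.subset_span (Set.mem_range_self i)) _ hi

end nzd

/-- Elements which, up to a power of `y` and modulo `I`, only involve variables in `S`. -/
def redSub (I : Ideal (MvPolynomial σ F)) (y : MvPolynomial σ F) (S : Set σ)
    (hy : y ∈ Algebra.adjoin F ((X : σ → MvPolynomial σ F) '' S)) :
    Subalgebra F (MvPolynomial σ F) where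
  carrier := {p | ∃ N : ℕ, ∃ g ∈ Algebra.adjoin F ((X : σ → MvPolynomial σ F) '' S),
    y ^ N * p - g ∈ I}
  mul_mem' := by
    rintro p q ⟨N, g, hg, h⟩ ⟨M, g', hg', h'⟩
    refine ⟨N + M, g * g', mul_mem hg hg', ?_⟩
    have : y ^ (N + M) * (p * q) - g * g' = (y ^ N * p - g) * (y ^ M * q) +
      g * (y ^ M * q - g') := by ring
    rw [this]
    exact add_mem (Ideal.mul_mem_right _ _ h) (Ideal.mul_mem_left _ _ h')
  add_mem' := by
    rintro p q ⟨N, g, hg, h⟩ ⟨M, g', hg', h'⟩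
    refine ⟨N + M, y ^ M * g + y ^ N * g', add_mem (mul_mem (pow_mem hy _) hg)
      (mul_mem (pow_mem hy _) hg'), ?_⟩
    have : y ^ (N + M) * (p + q) - (y ^ M * g + y ^ N * g') = y ^ M * (y ^ N * p - g) +
      y ^ N * (y ^ M * q - g') := by ring
    rw [this]
    exact add_mem (Ideal.mul_mem_left _ _ h) (Ideal.mul_mem_left _ _ h')
  algebraMap_mem' := fun c => ⟨0, _, Subalgebra.algebraMap_mem _ c, by simp⟩

lemma redSub_of_mem (I : Ideal (MvPolynomial σ F)) (y : MvPolynomial σ F) (S : Set σ)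
    (hy : y ∈ Algebra.adjoin F ((X : σ → MvPolynomial σ F) '' S)) {p : MvPolynomial σ F}
    (hp : p ∈ I) : p ∈ redSub I y S hy := ⟨0, 0, zero_mem _, by simpa using hp⟩

lemma redSub_of_X (I : Ideal (MvPolynomial σ F)) (y : MvPolynomial σ F) (S : Set σ)
    (hy : y ∈ Algebra.adjoin F ((X : σ → MvPolynomial σ F) '' S)) {s : σ}
    (hs : s ∈ S) : X s ∈ redSub I y S hy :=
  ⟨0, X s, Algebra.subset_adjoin ⟨s, hs, rfl⟩, by simp⟩

lemma redSub_of_mul (I : Ideal (MvPolynomial σ F)) (y : MvPolynomial σ F) (S : Set σ)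
    (hy : y ∈ Algebra.adjoin F ((X : σ → MvPolynomial σ F) '' S)) {p : MvPolynomial σ F}
    (hp : y * p ∈ redSub I y S hy) : p ∈ redSub I y S hy := by
  obtain ⟨N, g, hg, h⟩ := hp
  refine ⟨N + 1, g, hg, ?_⟩
  rwa [pow_succ, mul_assoc]

lemma prime_of_param (I : Ideal (MvPolynomial σ F)) (y : MvPolynomial σ F) (S : Set σ)
    (ψ : MvPolynomial σ F →ₐ[F] FractionRing (MvPolynomial σ F))
    (hI : ∀ p ∈ I, ψ p = 0)
    (hS : ∀ s ∈ S, ψ (X s) = algebraMap _ (FractionRing (MvPolynomial σ F)) (X s : MvPolynomial σ F))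
    (hy : y ∈ Algebra.adjoin F ((X : σ → MvPolynomial σ F) '' S))
    (hv : ∀ s, X s ∈ redSub I y S hy)
    (nzd : ∀ g, y * g ∈ I → g ∈ I) : I.IsPrime := by
  have hred : ∀ p, p ∈ redSub I y S hy := by
    intro p
    induction p using MvPolynomial.induction_on with
    | C a => exact Subalgebra.algebraMap_mem _ a
    | add p q hp hq => exact add_mem hp hq
    | mul_X p s hp => exact mul_mem hp (hv s)
  have hadj : ∀ g ∈ Algebra.adjoin F ((X : σ → MvPolynomial σ F) '' S),
      ψ g = algebraMap _ (FractionRing (MvPolynomial σ F)) g := by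
    intro g hg
    induction hg using Algebra.adjoin_induction with
    | mem x hx => obtain ⟨s, hs, rfl⟩ := hx; exact hS s hs
    | algebraMap c =>
      rw [AlgHom.commutes, ← IsScalarTower.algebraMap_apply]
    | add x y _ _ hx hy => rw [map_add, map_add, hx, hy]
    | mul x y _ _ hx hy => rw [map_mul, map_mul, hx, hy]
  have hnz : ∀ N g, y ^ N * g ∈ I → g ∈ I := by
    intro N
    induction N with
    | zero => intro g hg; simpa using hg
    | succ N ih => intro g hg; exact nzd _ (ih _ (by rwa [pow_succ, mul_assoc] at hg))
  have hker : I = RingHom.ker ψ := by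
    refine le_antisymm (fun p hp => hI p hp) fun p hp => ?_
    obtain ⟨N, g, hg, h⟩ := hred p
    have h1 := hI _ h
    rw [map_sub, map_mul, (show ψ p = 0 from hp), mul_zero, zero_sub, neg_eq_zero, hadj g hg] at h1
    have h2 : g = 0 := by
      apply IsFractionRing.injective (MvPolynomial σ F) (FractionRing (MvPolynomial σ F))
      rw [h1, map_zero]
    rw [h2, sub_zero] at h
    exact hnz N p h
  rw [hker]
  exact RingHom.ker_isPrime _

lemma prime_span_vars (Z : Set σ) :
    (Ideal.span ((X : σ → MvPolynomial σ F) '' Z)).IsPrime := by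
  classical
  refine prime_of_param _ 1 Zᶜ (aeval fun s => if s ∈ Z then 0 else algebraMap _ _ (X s : MvPolynomial σ F))
    ?_ ?_ (one_mem _) ?_ ?_
  · intro p hp
    refine (Ideal.span_le (I := RingHom.ker _)).2 ?_ hp
    rintro _ ⟨s, hs, rfl⟩
    simp [hs]
  · intro s hs
    rw [MvPolynomial.aeval_X, if_neg hs]
  · intro s
    by_cases hs : s ∈ Z
    · exact redSub_of_mem _ _ _ _ (Ideal.subset_span ⟨s, hs, rfl⟩)
    · exact redSub_of_X _ _ _ _ hs
  · intro g hg; simpa using hg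

/-- Labels of variables. -/
inductive JL : Type
  | a (i : ℕ) : JL
  | b (i : ℕ) : JL
  | g (i : ℕ) : JL
  | h (i : ℕ) : JL
  | z : JL
  | o : JL

/-- weights of labels -/
def wl (n : ℕ) : JL → ℕ
  | .a i => (4 * n * n + 4 * n + 1) - (4 * i * i + 4 * i + 1)
  | .b i => (4 * n * n + 4 * n + 1 + 4 * i) - (4 * i * i + 1)
  | .g i => (4 * n * n + 4 * n + 1) - (4 * i * i)
  | .h i => (4 * n * n + 4 * n + 1) - (4 * i * i)
  | .z => 0
  | .o => 0

lemma wl_a (n i : ℕ) (h : i ≤ n) :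
    (wl n (.a i) : ℤ) = (4 * n * n + 4 * n + 1) - (2 * i + 1) ^ 2 := by
  have : 4 * i * i + 4 * i + 1 ≤ 4 * n * n + 4 * n + 1 := by gcongr
  simp only [wl]; rw [Nat.cast_sub this]; push_cast; ring

lemma wl_b (n i : ℕ) (h : i ≤ n) :
    (wl n (.b i) : ℤ) = (4 * n * n + 4 * n + 1) - (2 * i - 1) ^ 2 := by
  have : 4 * i * i + 1 ≤ 4 * n * n + 4 * n + 1 + 4 * i := by nlinarith
  simp only [wl]; rw [Nat.cast_sub this]; push_cast; ring

lemma wl_g (n i : ℕ) (h : i ≤ n) :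
    (wl n (.g i) : ℤ) = (4 * n * n + 4 * n + 1) - (2 * i) ^ 2 := by
  have : 4 * i * i ≤ 4 * n * n + 4 * n + 1 := by nlinarith
  simp only [wl]; rw [Nat.cast_sub this]; push_cast; ring

lemma wl_h (n i : ℕ) (h : i ≤ n) :
    (wl n (.h i) : ℤ) = (4 * n * n + 4 * n + 1) - (2 * i) ^ 2 := wl_g n i h

lemma WLt.XX (w : σ → ℕ) (s t : σ) {D : ℕ} (h : w s + w t < D) :
    WLt w (X s * X t : MvPolynomial σ F) D := by
  have h1 := WLt.monomial w (Finsupp.single s 1 + Finsupp.single t 1) (1 : F)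
  have h2 : (X s * X t : MvPolynomial σ F) = MvPolynomial.monomial (Finsupp.single s 1 + Finsupp.single t 1) 1 := by
    rw [MvPolynomial.X, MvPolynomial.X, MvPolynomial.monomial_mul, one_mul]
  rw [h2]
  refine h1.mono ?_
  rw [map_add, Finsupp.weight_single, Finsupp.weight_single]
  simp; omega

lemma lmon_of_ne {ι : Type*} (p q : ι → σ) (i : ι) (h : p i ≠ q i) :
    lmon p q i = Finsupp.single (p i) 1 + Finsupp.single (q i) 1 := by
  classical
  ext s
  simp only [lmon, Finsupp.sup_apply, Finsupp.add_apply, Finsupp.single_apply]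
  split_ifs with h1 h2
  · exact absurd (h1.trans h2.symm) h
  all_goals simp

lemma WLead_of_ne {ι : Type*} (w : σ → ℕ) (p q : ι → σ) (i : ι) (h : p i ≠ q i)
    (f g : MvPolynomial σ F) (hf : f = X (p i) * X (q i) + g) (hg : WLt w g (w (p i) + w (q i))) :
    WLead w f (lmon p q i) := by
  unfold WLead
  rw [lmon_of_ne p q i h, map_add, Finsupp.weight_single, Finsupp.weight_single]
  have h2 : (X (p i) * X (q i) : MvPolynomial σ F) = MvPolynomial.monomial (Finsupp.single (p i) 1 + Finsupp.single (q i) 1) 1 := by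
    rw [MvPolynomial.X, MvPolynomial.X, MvPolynomial.monomial_mul, one_mul]
  rw [hf, h2, add_sub_cancel_left]
  simpa using hg

/-- the jet equations -/
noncomputable def jetEq (F : Type*) [Field F] {σ : Type*} (A B G H : ℕ → σ) (m : ℕ) :
    MvPolynomial σ F :=
  (∑ j ∈ Finset.range (m + 1), X (A j) * X (B (m - j))) -
    (∑ j ∈ Finset.range (m + 1), X (G j) * X (H (m - j)))

section jet
variable (n : ℕ) (A B G H : ℕ → σ) (lab : σ → JL)
  (hA : ∀ i ≤ n, lab (A i) = .a i) (hB : ∀ i ≤ n, lab (B i) = .b i)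
  (hG : ∀ i ≤ n, lab (G i) = .g i) (hH : ∀ i ≤ n, lab (H i) = .h i)
include hA hB hG hH

lemma jet_lead_even (i : ℕ) (hi : 2 * i ≤ n) {ι : Type*} (p q : ι → σ) (x : ι)
    (hp : p x = G i) (hq : q x = H i) :
    WLead (fun s => wl n (lab s)) (- jetEq F A B G H (2 * i)) (lmon p q x) := by
  have hne : p x ≠ q x := by
    intro h
    rw [hp, hq] at h
    have := congrArg lab h
    rw [hG i (by omega), hH i (by omega)] at this
    cases this
  refine WLead_of_ne _ p q x hne _
    ((∑ j ∈ (Finset.range (2 * i + 1)).erase i, X (G j) * X (H (2 * i - j))) +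
      - (∑ j ∈ Finset.range (2 * i + 1), X (A j) * X (B (2 * i - j)))) ?_ ?_
  · unfold jetEq
    rw [← Finset.add_sum_erase (Finset.range (2 * i + 1)) (fun j => X (G j) * X (H (2 * i - j)))
      (Finset.mem_range.2 (by omega : i < 2 * i + 1)), hp, hq]
    have : 2 * i - i = i := by omega
    simp only [this]
    ring
  · rw [hp, hq]
    refine WLt.add (WLt.sum _ _ fun j hj => WLt.XX _ _ _ ?_)
      (WLt.neg (WLt.sum _ _ fun j hj => WLt.XX _ _ _ ?_))
    · rw [Finset.mem_erase, Finset.mem_range] at hj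
      obtain ⟨k, hk⟩ : ∃ k, 2 * i - j = k := ⟨_, rfl⟩
      have hjk : (j : ℤ) + k = 2 * i := by omega
      rw [hk, hG j (by omega), hH k (by omega), hG i (by omega), hH i (by omega)]
      zify
      rw [wl_g n j (by omega), wl_h n k (by omega), wl_g n i (by omega), wl_h n i (by omega)]
      have h0 : (0 : ℤ) < (j - i) ^ 2 := by
        have : (j : ℤ) - i ≠ 0 := by omega
        positivity
      have : (k : ℤ) = 2 * i - j := by omega
      rw [this]
      nlinarith
    · rw [Finset.mem_range] at hj
      obtain ⟨k, hk⟩ : ∃ k, 2 * i - j = k := ⟨_, rfl⟩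
      rw [hk, hA j (by omega), hB k (by omega), hG i (by omega), hH i (by omega)]
      zify
      rw [wl_a n j (by omega), wl_b n k (by omega), wl_g n i (by omega), wl_h n i (by omega)]
      have h0 : (0 : ℤ) < (2 * j + 1 - 2 * i) ^ 2 := by
        have : 2 * (j : ℤ) + 1 - 2 * i ≠ 0 := by omega
        positivity
      have : (k : ℤ) = 2 * i - j := by omega
      rw [this]
      nlinarith

lemma jet_lead_odd (i : ℕ) (hi : 2 * i + 1 ≤ n) {ι : Type*} (p q : ι → σ) (x : ι)
    (hp : p x = A i) (hq : q x = B (i + 1)) :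
    WLead (fun s => wl n (lab s)) (jetEq F A B G H (2 * i + 1)) (lmon p q x) := by
  have hne : p x ≠ q x := by
    intro h
    rw [hp, hq] at h
    have := congrArg lab h
    rw [hA i (by omega), hB (i + 1) (by omega)] at this
    cases this
  refine WLead_of_ne _ p q x hne _
    ((∑ j ∈ (Finset.range (2 * i + 1 + 1)).erase i, X (A j) * X (B (2 * i + 1 - j))) +
      - (∑ j ∈ Finset.range (2 * i + 1 + 1), X (G j) * X (H (2 * i + 1 - j)))) ?_ ?_
  · unfold jetEq
    rw [← Finset.add_sum_erase (Finset.range (2 * i + 1 + 1)) (fun j => X (A j) * X (B (2 * i + 1 - j)))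
      (Finset.mem_range.2 (by omega : i < 2 * i + 1 + 1)), hp, hq]
    have : 2 * i + 1 - i = i + 1 := by omega
    simp only [this]
    ring
  · rw [hp, hq]
    refine WLt.add (WLt.sum _ _ fun j hj => WLt.XX _ _ _ ?_)
      (WLt.neg (WLt.sum _ _ fun j hj => WLt.XX _ _ _ ?_))
    · rw [Finset.mem_erase, Finset.mem_range] at hj
      obtain ⟨k, hk⟩ : ∃ k, 2 * i + 1 - j = k := ⟨_, rfl⟩
      rw [hk, hA j (by omega), hB k (by omega), hA i (by omega), hB (i + 1) (by omega)]
      zify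
      rw [wl_a n j (by omega), wl_b n k (by omega), wl_a n i (by omega), wl_b n (i + 1) (by omega)]
      have h0 : (0 : ℤ) < (j - i) ^ 2 := by
        have : (j : ℤ) - i ≠ 0 := by omega
        positivity
      have : (k : ℤ) = 2 * i + 1 - j := by omega
      rw [this]
      push_cast
      nlinarith
    · rw [Finset.mem_range] at hj
      obtain ⟨k, hk⟩ : ∃ k, 2 * i + 1 - j = k := ⟨_, rfl⟩
      rw [hk, hG j (by omega), hH k (by omega), hA i (by omega), hB (i + 1) (by omega)]
      zify
      rw [wl_g n j (by omega), wl_h n k (by omega), wl_a n i (by omega), wl_b n (i + 1) (by omega)]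
      have h0 : (0 : ℤ) < (2 * j - 2 * i - 1) ^ 2 := by
        have : 2 * (j : ℤ) - 2 * i - 1 ≠ 0 := by omega
        positivity
      have : (k : ℤ) = 2 * i + 1 - j := by omega
      rw [this]
      push_cast
      nlinarith

/-- `X (B 0)` is a nonzerodivisor modulo the jet ideal. -/
lemma jet_nzd [Fintype σ] (y : MvPolynomial σ F)
    (hy : X (B 0) * y ∈ Ideal.span ({p | ∃ s, lab s = .z ∧ p = X s} ∪
      {p | ∃ m ≤ n, p = jetEq F A B G H m})) :
    y ∈ Ideal.span ({p | ∃ s, lab s = .z ∧ p = X s} ∪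
      {p | ∃ m ≤ n, p = jetEq F A B G H m}) := by
  classical
  let ι := {s // lab s = .z} ⊕ Fin (n + 1)
  let p : ι → σ := Sum.elim (fun s => s.1)
    (fun m => if (m : ℕ) % 2 = 0 then G ((m : ℕ) / 2) else A ((m : ℕ) / 2))
  let q : ι → σ := Sum.elim (fun s => s.1)
    (fun m => if (m : ℕ) % 2 = 0 then H ((m : ℕ) / 2) else B ((m : ℕ) / 2 + 1))
  let f : ι → MvPolynomial σ F := Sum.elim (fun s => X s.1)
    (fun m => if (m : ℕ) % 2 = 0 then - jetEq F A B G H m else jetEq F A B G H m)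
  have hlp : ∀ m : Fin (n + 1), lab (p (Sum.inr m)) =
      if (m : ℕ) % 2 = 0 then .g ((m : ℕ) / 2) else .a ((m : ℕ) / 2) := by
    intro m
    simp only [p, Sum.elim_inr]
    split_ifs
    · exact hG _ (by omega)
    · exact hA _ (by omega)
  have hlq : ∀ m : Fin (n + 1), lab (q (Sum.inr m)) =
      if (m : ℕ) % 2 = 0 then .h ((m : ℕ) / 2) else .b ((m : ℕ) / 2 + 1) := by
    intro m
    simp only [q, Sum.elim_inr]
    split_ifs
    · exact hH _ (by omega)
    · exact hB _ (by omega)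
  have hlz : ∀ s : {s // lab s = .z}, lab (p (Sum.inl s)) = .z := fun s => s.2
  have hlz' : ∀ s : {s // lab s = .z}, lab (q (Sum.inl s)) = .z := fun s => s.2
  have hspan : Ideal.span ({p | ∃ s, lab s = .z ∧ p = X s} ∪
      {p | ∃ m ≤ n, p = jetEq F A B G H m}) = Ideal.span (Set.range f) := by
    apply le_antisymm
    · rw [Ideal.span_le]
      rintro _ (⟨s, hs, rfl⟩ | ⟨m, hm, rfl⟩)
      · exact Ideal.subset_span ⟨Sum.inl ⟨s, hs⟩, rfl⟩
      · have h1 : f (Sum.inr ⟨m, by omega⟩) ∈ Ideal.span (Set.range f) :=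
          Ideal.subset_span (Set.mem_range_self _)
        simp only [f, Sum.elim_inr] at h1
        split_ifs at h1
        · exact neg_mem_iff.1 h1
        · exact h1
    · rw [Ideal.span_le]
      rintro _ ⟨s | m, rfl⟩
      · exact Ideal.subset_span (Or.inl ⟨s.1, s.2, rfl⟩)
      · have h1 : jetEq F A B G H m ∈ Ideal.span ({p | ∃ s, lab s = .z ∧ p = X s} ∪
          {p | ∃ m ≤ n, p = jetEq F A B G H m}) :=
          Ideal.subset_span (Or.inr ⟨m, by omega, rfl⟩)
        simp only [f, Sum.elim_inr]
        split_ifs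
        · exact neg_mem h1
        · exact h1
  rw [hspan] at hy ⊢
  refine nzd_of_coprime_lead p q ?_ (fun s => wl n (lab s)) f ?_ (B 0) ?_ y hy
  · rintro (s | m) (t | m') hne
    · have : s.1 ≠ t.1 := fun h => hne (by rw [Subtype.ext h])
      exact ⟨this, this, this⟩
    · refine ⟨fun h => ?_, fun h => ?_, fun h => ?_⟩ <;> replace h := congrArg lab h <;>
        simp only [hlp, hlq, hlz, hlz'] at h <;> split_ifs at h
    · refine ⟨fun h => ?_, fun h => ?_, fun h => ?_⟩ <;> replace h := congrArg lab h <;>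
        simp only [hlp, hlq, hlz, hlz'] at h <;> split_ifs at h
    · have hmm : (m : ℕ) ≠ m' := fun h => hne (by rw [Fin.ext h])
      refine ⟨fun h => ?_, fun h => ?_, fun h => ?_⟩ <;> replace h := congrArg lab h <;>
        simp only [hlp, hlq, hlz, hlz'] at h <;> split_ifs at h <;> 
        first | cases h | (injection h; omega)
  · rintro (s | m)
    · have h1 : lmon p q (Sum.inl s) = Finsupp.single s.1 1 := by
        simp [lmon, p, q]
      rw [h1]
      exact WLead.monomial _ _
    · simp only [f, Sum.elim_inr]
      split_ifs with h
      · have h1 : (m : ℕ) = 2 * ((m : ℕ) / 2) := by omega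
        have := jet_lead_even (F := F) n A B G H lab hA hB hG hH ((m : ℕ) / 2) (by omega) p q
          (Sum.inr m) (by simp [p, h]) (by simp [q, h])
        rwa [← h1] at this
      · have h1 : (m : ℕ) = 2 * ((m : ℕ) / 2) + 1 := by omega
        have := jet_lead_odd (F := F) n A B G H lab hA hB hG hH ((m : ℕ) / 2) (by omega) p q
          (Sum.inr m) (by simp [p, h]) (by simp [q, h])
        rwa [← h1] at this
  · rintro (s | m)
    · refine ⟨fun h => ?_, fun h => ?_⟩ <;> replace h := congrArg lab h <;>
        simp only [hlz, hlz', hB 0 (Nat.zero_le _)] at h <;> cases h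
    · refine ⟨fun h => ?_, fun h => ?_⟩ <;> replace h := congrArg lab h <;>
        simp only [hlp, hlq, hB 0 (Nat.zero_le _)] at h <;> split_ifs at h
      injection h; omega

theorem jet_prime [Fintype σ] (hA' : ∀ s i, lab s = .a i → i ≤ n ∧ s = A i) :
    (Ideal.span ({p | ∃ s, lab s = .z ∧ p = X s} ∪
      {p | ∃ m ≤ n, p = jetEq F A B G H m})).IsPrime := by
  classical
  let K := FractionRing (MvPolynomial σ F)
  let x : σ → K := fun s => algebraMap (MvPolynomial σ F) K (X s)
  let Bs : PowerSeries K := PowerSeries.mk fun i => x (B i)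
  let Gs : PowerSeries K := PowerSeries.mk fun i => x (G i)
  let Hs : PowerSeries K := PowerSeries.mk fun i => x (H i)
  let As : PowerSeries K := Gs * Hs * Bs⁻¹
  have hAB : As * Bs = Gs * Hs := by
    have : PowerSeries.constantCoeff Bs ≠ 0 := by
      rw [← PowerSeries.coeff_zero_eq_constantCoeff_apply, PowerSeries.coeff_mk]
      intro h
      have : (X (B 0) : MvPolynomial σ F) = 0 := by
        apply IsFractionRing.injective (MvPolynomial σ F) K
        rw [map_zero]; exact h
      exact MvPolynomial.X_ne_zero _ this
    simp only [As]
    rw [mul_assoc, PowerSeries.inv_mul_cancel _ this, mul_one]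
  let v : σ → K := fun s => match lab s with
    | .a i => PowerSeries.coeff i As
    | .z => 0
    | _ => x s
  let S : Set σ := {s | lab s ≠ .z ∧ ∀ i, lab s ≠ .a i}
  have hvS : ∀ s ∈ S, v s = x s := by
    rintro s ⟨h1, h2⟩
    simp only [v]
  have hBS : ∀ i ≤ n, B i ∈ S := fun i hi => ⟨by simp [hB i hi], by simp [hB i hi]⟩
  have hGS : ∀ i ≤ n, G i ∈ S := fun i hi => ⟨by simp [hG i hi], by simp [hG i hi]⟩
  have hHS : ∀ i ≤ n, H i ∈ S := fun i hi => ⟨by simp [hH i hi], by simp [hH i hi]⟩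
  have hvA : ∀ i ≤ n, v (A i) = PowerSeries.coeff i As := by
    intro i hi
    simp only [v, hA i hi]
  have hy : (X (B 0) : MvPolynomial σ F) ∈ Algebra.adjoin F ((X : σ → MvPolynomial σ F) '' S) :=
    Algebra.subset_adjoin ⟨_, hBS 0 (Nat.zero_le _), rfl⟩
  refine prime_of_param _ (X (B 0)) S (aeval v) ?_ ?_ hy ?_ ?_
  · intro p hp
    refine (Ideal.span_le (I := RingHom.ker _)).2 ?_ hp
    rintro _ (⟨s, hs, rfl⟩ | ⟨m, hm, rfl⟩)
    · simp [v, hs]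
    · have h1 := congrArg (PowerSeries.coeff m) hAB
      rw [PowerSeries.coeff_mul, PowerSeries.coeff_mul,
        Finset.Nat.sum_antidiagonal_eq_sum_range_succ_mk,
        Finset.Nat.sum_antidiagonal_eq_sum_range_succ_mk] at h1
      change aeval v (jetEq F A B G H m) = 0
      unfold jetEq
      simp only [map_sub, map_sum, map_mul, MvPolynomial.aeval_X]
      rw [sub_eq_zero]
      refine Eq.trans (Eq.trans (Finset.sum_congr rfl fun j hj => ?_) h1)
        (Finset.sum_congr rfl fun j hj => ?_)
      · rw [Finset.mem_range] at hj
        simp only [Bs, PowerSeries.coeff_mk]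
        rw [hvA j (by omega), hvS _ (hBS (m - j) (by omega))]
      · rw [Finset.mem_range] at hj
        simp only [Gs, Hs, PowerSeries.coeff_mk]
        rw [hvS _ (hGS j (by omega)), hvS _ (hHS (m - j) (by omega))]
  · intro s hs
    rw [MvPolynomial.aeval_X, hvS s hs]
  · have key : ∀ i ≤ n, X (A i) ∈ redSub (Ideal.span ({p | ∃ s, lab s = .z ∧ p = X s} ∪
      {p | ∃ m ≤ n, p = jetEq F A B G H m})) (X (B 0)) S hy := by
      intro i
      induction i using Nat.strong_induction_on with
      | _ i ih =>
        intro hi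
        apply redSub_of_mul
        have h1 : (X (B 0) * X (A i) : MvPolynomial σ F) = jetEq F A B G H i +
            (∑ j ∈ Finset.range (i + 1), X (G j) * X (H (i - j))) -
            (∑ j ∈ Finset.range i, X (A j) * X (B (i - j))) := by
          unfold jetEq
          rw [Finset.sum_range_succ (fun j => X (A j) * X (B (i - j)))]
          simp only [Nat.sub_self]
          ring
        rw [h1]
        refine sub_mem (add_mem (redSub_of_mem _ _ _ _ (Ideal.subset_span (Or.inr ⟨i, hi, rfl⟩)))
          (sum_mem fun j hj => ?_)) (sum_mem fun j hj => ?_)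
        · rw [Finset.mem_range] at hj
          exact mul_mem (redSub_of_X _ _ _ _ (hGS j (by omega)))
            (redSub_of_X _ _ _ _ (hHS _ (by omega)))
        · rw [Finset.mem_range] at hj
          exact mul_mem (ih j hj (by omega)) (redSub_of_X _ _ _ _ (hBS _ (by omega)))
    intro s
    by_cases hs : s ∈ S
    · exact redSub_of_X _ _ _ _ hs
    · by_cases hz : lab s = .z
      · exact redSub_of_mem _ _ _ _ (Ideal.subset_span (Or.inl ⟨s, hz, rfl⟩))
      · have : ∃ i, lab s = .a i := by
          by_contra hcon
          push Not at hcon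
          exact hs ⟨hz, hcon⟩
        obtain ⟨i, hi⟩ := this
        obtain ⟨h1, h2⟩ := hA' s i hi
        rw [h2]
        exact key i h1
  · intro g hg
    exact jet_nzd n A B G H lab hA hB hG hH g hg

end jet

end JetPrime

section FinalLemmas

open MvPolynomial

/-- labelling of the variables -/
def labV (u r k n : ℕ) : Vars u r → JL
  | .inl i => if (i : ℕ) + 1 < k then .z else if (i : ℕ) + 1 ≤ k + n then .a ((i : ℕ) + 1 - k) else .o
  | .inr (.inl i) => if (i : ℕ) + 1 < r - k then .z else
      if (i : ℕ) + 1 ≤ r - k + n then .b ((i : ℕ) + 1 - (r - k)) else .o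
  | .inr (.inr (.inl i)) => if (i : ℕ) ≤ n then .g i else .o
  | .inr (.inr (.inr i)) => if (i : ℕ) ≤ n then .h i else .o

theorem Eset_prime_big (F : Type*) [Field F] (u r k l : ℕ)
    (hru : r < u) (hr : 2 ≤ r) (hk1 : 1 ≤ k) (hk2 : k ≤ r - 1)
    (hl2 : l ≤ u - r) (hkl : ¬ k + l ≤ r) :
    (Ideal.span (Eset F u r k l)).IsPrime := by
  obtain ⟨n, hn⟩ : ∃ n, n = k + l - r - 1 := ⟨_, rfl⟩
  let d : Vars u r := .inr (.inr (.inl ⟨0, by omega⟩))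
  let A : ℕ → Vars u r := fun i => if h : k + i - 1 < u - 1 then .inl ⟨k + i - 1, h⟩ else d
  let B : ℕ → Vars u r := fun i =>
    if h : r - k + i - 1 < u - r - 1 then .inr (.inl ⟨r - k + i - 1, h⟩) else d
  let G : ℕ → Vars u r := fun i => if h : i < u - r then .inr (.inr (.inl ⟨i, h⟩)) else d
  let H : ℕ → Vars u r := fun i => if h : i < u - r then .inr (.inr (.inr ⟨i, h⟩)) else d
  have main := jet_prime (F := F) n A B G H (labV u r k n) ?_ ?_ ?_ ?_ ?_
  · convert main using 2
    unfold Eset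
    rw [if_neg hkl, ← hn]
    have hX : ∀ i ≤ n, Av F u r (k + i) = X (A i) := by
      intro i hi
      have h : k + i - 1 < u - 1 := by omega
      simp [Av, A, h]
    have hXB : ∀ i ≤ n, Bv F u r (r - k + i) = X (B i) := by
      intro i hi
      have h : r - k + i - 1 < u - r - 1 := by omega
      simp [Bv, B, h]
    have hXG : ∀ i ≤ n, Gv F u r i = X (G i) := by
      intro i hi
      have h : i < u - r := by omega
      simp [Gv, G, h]
    have hXH : ∀ i ≤ n, Hv F u r i = X (H i) := by
      intro i hi
      have h : i < u - r := by omega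
      simp [Hv, H, h]
    congr 1
    · ext p
      constructor
      · rintro (⟨i, h1, h2, rfl⟩ | ⟨i, h1, h2, rfl⟩)
        · have h : i - 1 < u - 1 := by omega
          refine ⟨.inl ⟨i - 1, h⟩, ?_, ?_⟩
          · have : i - 1 + 1 < k := by omega
            simp [labV, this]
          · simp [Av, h]
        · have h : i - 1 < u - r - 1 := by omega
          refine ⟨.inr (.inl ⟨i - 1, h⟩), ?_, ?_⟩
          · have : i - 1 + 1 < r - k := by omega
            simp [labV, this]
          · simp [Bv, h]
      · rintro ⟨(i | i | i | i), hs, rfl⟩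
        · left
          simp only [labV] at hs
          split_ifs at hs with h1
          refine ⟨i + 1, by omega, by omega, ?_⟩
          have h : (i : ℕ) < u - 1 := i.2
          simp [Av, h]
        · right
          simp only [labV] at hs
          split_ifs at hs with h1
          refine ⟨i + 1, by omega, by omega, ?_⟩
          have h : (i : ℕ) < u - r - 1 := i.2
          simp [Bv, h]
        · simp only [labV] at hs
          split_ifs at hs
        · simp only [labV] at hs
          split_ifs at hs
    · ext p
      refine exists_congr fun m => and_congr_right fun hm => ?_
      have : (∑ j ∈ Finset.range (m + 1), Av F u r (k + j) * Bv F u r (r - k + m - j)) -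
          (∑ j ∈ Finset.range (m + 1), Gv F u r j * Hv F u r (m - j)) = jetEq F A B G H m := by
        unfold jetEq
        congr 1
        · refine Finset.sum_congr rfl fun j hj => ?_
          rw [Finset.mem_range] at hj
          rw [hX j (by omega), Nat.add_sub_assoc (by omega), hXB _ (by omega)]
        · refine Finset.sum_congr rfl fun j hj => ?_
          rw [Finset.mem_range] at hj
          rw [hXG j (by omega), hXH _ (by omega)]
      rw [this]
  · intro i hi
    have h : k + i - 1 < u - 1 := by omega
    have h1 : ¬ (k + i - 1 + 1 < k) := by omega
    have h2 : k + i - 1 + 1 ≤ k + n := by omega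
    have h3 : k + i - 1 + 1 - k = i := by omega
    simp only [A, h, dif_pos, labV, h1, h2, h3, if_true, if_false]
  · intro i hi
    have h : r - k + i - 1 < u - r - 1 := by omega
    have h1 : ¬ (r - k + i - 1 + 1 < r - k) := by omega
    have h2 : r - k + i - 1 + 1 ≤ r - k + n := by omega
    have h3 : r - k + i - 1 + 1 - (r - k) = i := by omega
    simp only [B, h, dif_pos, labV, h1, h2, h3, if_true, if_false]
  · intro i hi
    have h : i < u - r := by omega
    simp only [G, h, dif_pos, labV, hi, if_true]
  · intro i hi
    have h : i < u - r := by omega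
    simp only [H, h, dif_pos, labV, hi, if_true]
  · rintro (s | s | s | s) i hs
    · simp only [labV] at hs
      split_ifs at hs with h1 h2
      injection hs with hs
      refine ⟨by omega, ?_⟩
      have h : k + i - 1 < u - 1 := by omega
      simp only [A, h, dif_pos]
      congr 1
      ext
      simp only
      omega
    all_goals
      simp only [labV] at hs
      split_ifs at hs

theorem Eset_prime_small (F : Type*) [Field F] (u r k l : ℕ)
    (hru : r < u) (hr : 2 ≤ r) (hk2 : k ≤ r - 1)
    (hl2 : l ≤ u - r) (hkl : k + l ≤ r) :
    (Ideal.span (Eset F u r k l)).IsPrime := by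
  have main := prime_span_vars (F := F) ({s : Vars u r | (∃ i : Fin (u - 1), (i : ℕ) + 1 ≤ k - 1 ∧
    s = .inl i) ∨ (∃ i : Fin (u - r - 1), (i : ℕ) + 1 ≤ l - 1 ∧ s = .inr (.inl i))})
  convert main using 2
  unfold Eset
  rw [if_pos hkl]
  ext p
  constructor
  · rintro (⟨i, h1, h2, rfl⟩ | ⟨i, h1, h2, rfl⟩)
    · have h : i - 1 < u - 1 := by omega
      refine ⟨.inl ⟨i - 1, h⟩, Or.inl ⟨⟨i - 1, h⟩, by simp only; omega, rfl⟩, ?_⟩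
      simp [Av, h]
    · have h : i - 1 < u - r - 1 := by omega
      refine ⟨.inr (.inl ⟨i - 1, h⟩), Or.inr ⟨⟨i - 1, h⟩, by simp only; omega, rfl⟩, ?_⟩
      simp [Bv, h]
  · rintro ⟨_, (⟨i, hi, rfl⟩ | ⟨i, hi, rfl⟩), rfl⟩
    · left
      refine ⟨i + 1, by omega, by omega, ?_⟩
      have h : (i : ℕ) < u - 1 := i.2
      simp [Av, h]
    · right
      refine ⟨i + 1, by omega, by omega, ?_⟩
      have h : (i : ℕ) < u - r - 1 := i.2
      simp [Bv, h]

end FinalLemmas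

/-- The ideal generated by `E^Q_{k,l}` in the polynomial ring
`F[a_1,…,a_{u−1}, b_1,…,b_{u−r−1}, g_0,…,g_{u−r−1}, h_0,…,h_{u−r−1}]` is prime. -/
theorem statement1 (F : Type*) [Field F] [Infinite F] (u r k l : ℕ)
    (hru : r < u) (hr : 2 ≤ r) (hk1 : 1 ≤ k) (hk2 : k ≤ r - 1)
    (hl1 : 1 ≤ l) (hl2 : l ≤ u - r) :
    (Ideal.span (Eset F u r k l)).IsPrime := by
  by_cases hkl : k + l ≤ r
  · exact Eset_prime_small F u r k l hru hr hk2 hl2 hkl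
  · exact Eset_prime_big F u r k l hru hr hk1 hk2 hl2 hkl
end

section
/- Let F be an infinite field, let u > r ≥ 2 be integers, and let 1 ≤ k ≤ r−1 and 1 ≤ l ≤ u−r. The set E^Q_{k,l} consists of exactly k+l−2 polynomials, and the quotient of the polynomial ring F[a_1,…,a_{u−1}, b_1,…,b_{u−r−1}, g_0,…,g_{u−r−1}, h_0,…,h_{u−r−1}] (a polynomial ring in N = 4u−3r−2 variables) by the ideal generated by E^Q_{k,l} has Krull dimension N − (k+l−2) = 4u−3r−k−l; equivalently, the ideal generated by E^Q_{k,l} has height k+l−2, so it is a complete intersection ideal. -/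
open Polynomial

namespace S2

/-- The Krull dimension of a quotient is bounded by the dimensions of its integral quotients. -/
lemma dim_quot_le {R : Type*} [CommRing R] (I : Ideal R) (d : WithBot ℕ∞)
    (H : ∀ P : Ideal R, P.IsPrime → I ≤ P → ringKrullDim (R ⧸ P) ≤ d) :
    ringKrullDim (R ⧸ I) ≤ d := by
  rw [ringKrullDim_quotient]
  refine iSup_le fun s => ?_
  have hP := H s.head.1.asIdeal s.head.1.isPrime s.head.2
  refine le_trans ?_ hP
  rw [ringKrullDim_quotient]
  let t : LTSeries (PrimeSpectrum.zeroLocus (R := R) s.head.1.asIdeal) :=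
    { length := s.length
      toFun := fun i => ⟨(s i).1, by
        have := s.head_le i
        exact this⟩
      step := fun i => s.step i }
  exact le_iSup (fun t : LTSeries (PrimeSpectrum.zeroLocus (R := R) s.head.1.asIdeal) =>
    (t.length : WithBot ℕ∞)) t

/-- A finitely generated domain algebraic over the subalgebra generated by `T`
has dimension at most the cardinality of `T`. -/
lemma dim_le_of_algebraic {F D : Type*} [Field F] [CommRing D] [IsDomain D] [Algebra F D]
    [Algebra.FiniteType F D] (T : Set D) (n : ℕ) (hT : Cardinal.mk T ≤ n)
    [Algebra.IsAlgebraic (Algebra.adjoin F T) D] : ringKrullDim D ≤ n := by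
  obtain ⟨s, g, hinj, hgint⟩ := exists_integral_inj_algHom_of_fg F D
  have h1 : ringKrullDim D ≤ s := by
    let : Algebra (MvPolynomial (Fin s) F) D := g.toRingHom.toAlgebra
    have : Algebra.IsIntegral (MvPolynomial (Fin s) F) D := ⟨hgint⟩
    have h2 : ringKrullDim D ≤ ringKrullDim (MvPolynomial (Fin s) F) := by
      refine Order.krullDim_le_of_strictMono
        (PrimeSpectrum.comap (algebraMap (MvPolynomial (Fin s) F) D)) ?_
      intro p q hpq
      exact Ideal.IsIntegral.comap_lt_comap hpq
    rw [MvPolynomial.ringKrullDim_of_isNoetherianRing] at h2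
    simpa using h2
  have h3 : Algebra.trdeg F D ≤ n := (Algebra.IsAlgebraic.trdeg_le_cardinalMk F T).trans hT
  have hind : AlgebraicIndependent F (fun i => g (MvPolynomial.X i)) := by
    have := (MvPolynomial.algebraicIndependent_X (Fin s) F).map' (f := g) hinj
    exact this
  have h4 := hind.lift_cardinalMk_le_trdeg
  have h7 : s ≤ n := by
    have h6 := h4.trans (Cardinal.lift_le.mpr h3)
    simpa using h6
  exact h1.trans (by exact_mod_cast h7)

lemma key {F σ : Type*} [Field F] [Fintype σ] [DecidableEq σ] (P : Ideal (MvPolynomial σ F))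
    [P.IsPrime] (S : Finset σ)
    (hS : ∀ v ∈ S, IsAlgebraic (Algebra.adjoin F
      ((fun v => Ideal.Quotient.mk P (MvPolynomial.X v)) '' ((Sᶜ : Finset σ) : Set σ)))
      (Ideal.Quotient.mk P (MvPolynomial.X v))) :
    ringKrullDim (MvPolynomial σ F ⧸ P) ≤ ((Fintype.card σ - S.card : ℕ) : WithBot ℕ∞) := by
  classical
  set T := (fun v => Ideal.Quotient.mk P (MvPolynomial.X v)) '' ((Sᶜ : Finset σ) : Set σ) with hT
  have hall : ∀ v, IsAlgebraic (Algebra.adjoin F T)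
      (Ideal.Quotient.mk P (MvPolynomial.X v)) := by
    intro v
    by_cases hv : v ∈ S
    · exact hS v hv
    · have : Ideal.Quotient.mk P (MvPolynomial.X v) ∈ Algebra.adjoin F T :=
        Algebra.subset_adjoin ⟨v, by simpa using hv, rfl⟩
      exact isAlgebraic_algebraMap (⟨_, this⟩ : Algebra.adjoin F T)
  have : Algebra.IsAlgebraic (Algebra.adjoin F T) (MvPolynomial σ F ⧸ P) := by
    constructor
    intro x
    obtain ⟨x, rfl⟩ := Ideal.Quotient.mk_surjective x
    induction x using MvPolynomial.induction_on with
    | C a =>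
      have h : Ideal.Quotient.mk P (MvPolynomial.C a) =
        algebraMap (Algebra.adjoin F T) _ (algebraMap F (Algebra.adjoin F T) a) := rfl
      rw [h]
      exact isAlgebraic_algebraMap _
    | add p q hp hq => rw [map_add]; exact hp.add hq
    | mul_X p v hp => rw [map_mul]; exact hp.mul (hall v)
  refine dim_le_of_algebraic (F := F) T _ ?_
  have hfin : T = (((Sᶜ).image (fun v => Ideal.Quotient.mk P (MvPolynomial.X v : MvPolynomial σ F)) :
    Finset _) : Set (MvPolynomial σ F ⧸ P)) := by simp [hT]
  rw [hfin]
  simp only [Finset.coe_sort_coe, Cardinal.mk_coe_finset]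
  have := Finset.card_image_le (s := Sᶜ)
    (f := fun v => Ideal.Quotient.mk P (MvPolynomial.X v : MvPolynomial σ F))
  rw [Finset.card_compl] at this
  exact_mod_cast this

/-- The kernel of setting the variables in `S` to zero. -/
lemma height_origin {F σ : Type*} [Field F] [Fintype σ] [DecidableEq σ] :
    ((Fintype.card σ : ℕ) : ℕ∞) ≤
      (RingHom.ker (MvPolynomial.constantCoeff (σ := σ) (R := F))).height := by
  let φ : Finset σ → MvPolynomial σ F →ₐ[F] MvPolynomial σ F := fun S =>
    MvPolynomial.aeval (fun v => if v ∈ S then 0 else MvPolynomial.X v)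
  have hp : ∀ S, (RingHom.ker (φ S)).IsPrime := fun S => RingHom.ker_isPrime _
  have hlt : ∀ S v, v ∉ S → RingHom.ker (φ S) < RingHom.ker (φ (insert v S)) := by
    intro S v hv
    have hcomp : ∀ p, φ (insert v S) p = φ (insert v S) (φ S p) := by
      intro p
      have : φ (insert v S) = (φ (insert v S)).comp (φ S) := by
        ext w
        by_cases hw : w ∈ S <;> simp [φ, hw]
      exact DFunLike.congr_fun this p
    refine lt_of_le_of_ne ?_ ?_
    · intro p h
      rw [RingHom.mem_ker] at h ⊢
      rw [hcomp, h, map_zero]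
    · intro h
      have h1 : (MvPolynomial.X v : MvPolynomial σ F) ∈ RingHom.ker (φ (insert v S)) := by
        simp [RingHom.mem_ker, φ]
      rw [← h] at h1
      simp [RingHom.mem_ker, φ, hv] at h1
  have hh : ∀ S : Finset σ, (S.card : ℕ∞) ≤ (RingHom.ker (φ S)).height := by
    intro S
    induction S using Finset.induction_on with
    | empty => simp
    | insert v S hv ih =>
      rw [Finset.card_insert_of_notMem hv]
      have := hp S
      have := hp (insert v S)
      refine le_trans ?_ (Ideal.height_add_one_le_of_lt_of_isPrime (hlt S v hv))
      push_cast
      gcongr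
  refine (hh Finset.univ).trans (Ideal.height_mono ?_)
  intro p h
  rw [RingHom.mem_ker] at h ⊢
  have h2 : MvPolynomial.constantCoeff (φ Finset.univ p) = MvPolynomial.constantCoeff p := by
    have : (MvPolynomial.constantCoeff (σ := σ) (R := F)).comp (φ Finset.univ).toRingHom =
        MvPolynomial.constantCoeff := by
      apply MvPolynomial.ringHom_ext <;> simp [φ]
    exact DFunLike.congr_fun this p
  rw [← h2, h, map_zero]

lemma conv_mem {D : Type*} [CommRing D] (C : Subring D)
    (hdiv : ∀ x y, x ∈ C → x ≠ 0 → x * y ∈ C → y ∈ C) (α β : ℕ → D) (i n : ℕ)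
    (h0 : ∀ j < i, α j = 0) (hi : i < n → α i ≠ 0) (hα : ∀ j, α j ∈ C)
    (hc : ∀ m < n, ∑ j ∈ Finset.range (m + 1), α j * β (m - j) ∈ C) :
    ∀ j, j + i < n → β j ∈ C := by
  intro j
  induction j using Nat.strong_induction_on with
  | _ j ih =>
    intro hj
    refine hdiv (α i) _ (hα i) (hi (by omega)) ?_
    have h1 := hc (j + i) hj
    rw [← Finset.add_sum_erase _ _ (Finset.mem_range.mpr (show i < j + i + 1 by omega))] at h1
    rw [Nat.add_sub_cancel] at h1
    refine (add_mem_cancel_right ?_).mp h1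
    refine sum_mem fun s hs => ?_
    rw [Finset.mem_erase, Finset.mem_range] at hs
    rcases lt_or_ge s i with h | h
    · rw [h0 s h, zero_mul]; exact zero_mem _
    · exact mul_mem (hα s) (ih _ (by omega) (by omega))

lemma exists_order {D : Type*} [Zero D] (α : ℕ → D) (n : ℕ) :
    ∃ i ≤ n, (∀ j < i, α j = 0) ∧ (i < n → α i ≠ 0) := by
  induction n with
  | zero => exact ⟨0, le_rfl, by simp, by simp⟩
  | succ n ih =>
    obtain ⟨i, hi, h0, h1⟩ := ih
    rcases lt_or_eq_of_le hi with h | rfl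
    · exact ⟨i, by omega, h0, fun _ => h1 h⟩
    · by_cases hz : α i = 0
      · refine ⟨i + 1, le_rfl, fun j hj => ?_, by omega⟩
        rcases Nat.lt_succ_iff_lt_or_eq.mp hj with h | rfl
        · exact h0 j h
        · exact hz
      · exact ⟨i, by omega, h0, fun _ => hz⟩

/-- The variables `a_1,…,a_{p-1}, b_1,…,b_{q-1}`. -/
def Sset (u r p q : ℕ) : Finset (Vars u r) :=
  Finset.disjSum (Finset.univ.filter fun i : Fin (u - 1) => (i : ℕ) < p - 1)
    (Finset.disjSum (Finset.univ.filter fun i : Fin (u - r - 1) => (i : ℕ) < q - 1) ∅)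

lemma card_Sset (u r p q : ℕ) (hp : p ≤ u) (hq : q ≤ u - r) :
    (Sset u r p q).card = (p - 1) + (q - 1) := by
  simp only [Sset, Finset.card_disjSum, Finset.card_empty, add_zero]
  rw [Fin.card_filter_val_lt, Fin.card_filter_val_lt]
  omega

lemma card_Vars (u r : ℕ) (hru : r < u) : Fintype.card (Vars u r) = 4 * u - 3 * r - 2 := by
  simp [Vars]
  omega

lemma finite_card (F : Type*) [Field F] (u r k l : ℕ)
    (hk1 : 1 ≤ k) (hk2 : k ≤ r - 1) (hl1 : 1 ≤ l) :
    (Eset F u r k l).Finite ∧ (Eset F u r k l).ncard ≤ k + l - 2 := by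
  classical
  have main : ∃ s : Finset (MvPolynomial (Vars u r) F),
      Eset F u r k l ⊆ s ∧ s.card ≤ k + l - 2 := by
    unfold Eset
    split_ifs with h
    · refine ⟨(Finset.Icc 1 (k - 1)).image (Av F u r) ∪ (Finset.Icc 1 (l - 1)).image (Bv F u r),
        ?_, ?_⟩
      · rintro p (⟨i, h1, h2, rfl⟩ | ⟨i, h1, h2, rfl⟩)
        · exact Finset.mem_coe.mpr (Finset.mem_union_left _
            (Finset.mem_image_of_mem _ (Finset.mem_Icc.mpr ⟨h1, h2⟩)))
        · exact Finset.mem_coe.mpr (Finset.mem_union_right _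
            (Finset.mem_image_of_mem _ (Finset.mem_Icc.mpr ⟨h1, h2⟩)))
      · refine (Finset.card_union_le _ _).trans ?_
        refine (add_le_add Finset.card_image_le Finset.card_image_le).trans ?_
        simp only [Nat.card_Icc]
        omega
    · refine ⟨(Finset.Icc 1 (k - 1)).image (Av F u r) ∪
        (Finset.Icc 1 (r - k - 1)).image (Bv F u r) ∪
        (Finset.range (k + l - r)).image (fun m =>
          (∑ j ∈ Finset.range (m + 1), Av F u r (k + j) * Bv F u r (r - k + m - j)) -
          (∑ j ∈ Finset.range (m + 1), Gv F u r j * Hv F u r (m - j))), ?_, ?_⟩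
      · rintro p ((⟨i, h1, h2, rfl⟩ | ⟨i, h1, h2, rfl⟩) | ⟨m, hm, rfl⟩)
        · exact Finset.mem_coe.mpr (Finset.mem_union_left _ (Finset.mem_union_left _
            (Finset.mem_image_of_mem _ (Finset.mem_Icc.mpr ⟨h1, h2⟩))))
        · exact Finset.mem_coe.mpr (Finset.mem_union_left _ (Finset.mem_union_right _
            (Finset.mem_image_of_mem _ (Finset.mem_Icc.mpr ⟨h1, h2⟩))))
        · refine Finset.mem_coe.mpr (Finset.mem_union_right _ (Finset.mem_image.mpr
            ⟨m, Finset.mem_range.mpr (by omega), rfl⟩))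
      · refine (Finset.card_union_le _ _).trans ?_
        refine (add_le_add ((Finset.card_union_le _ _).trans
          (add_le_add Finset.card_image_le Finset.card_image_le)) Finset.card_image_le).trans ?_
        simp only [Nat.card_Icc, Finset.card_range]
        omega
  obtain ⟨s, hs, hc⟩ := main
  refine ⟨s.finite_toSet.subset hs, ?_⟩
  refine (Set.ncard_le_ncard hs s.finite_toSet).trans ?_
  rwa [Set.ncard_coe_finset]

lemma const_zero (F : Type*) [Field F] (u r k l : ℕ) :
    Eset F u r k l ⊆
      (RingHom.ker (MvPolynomial.constantCoeff (σ := Vars u r) (R := F)) : Set _) := by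
  have hA : ∀ i, MvPolynomial.constantCoeff (Av F u r i) = 0 := by
    intro i; unfold Av; split_ifs <;> simp
  have hB : ∀ i, MvPolynomial.constantCoeff (Bv F u r i) = 0 := by
    intro i; unfold Bv; split_ifs <;> simp
  have hG : ∀ i, MvPolynomial.constantCoeff (Gv F u r i) = 0 := by
    intro i; unfold Gv; split_ifs <;> simp
  intro p hp
  rw [SetLike.mem_coe, RingHom.mem_ker]
  unfold Eset at hp
  split_ifs at hp with h
  · rcases hp with ⟨i, h1, h2, rfl⟩ | ⟨i, h1, h2, rfl⟩
    · exact hA i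
    · exact hB i
  · rcases hp with (⟨i, h1, h2, rfl⟩ | ⟨i, h1, h2, rfl⟩) | ⟨m, hm, rfl⟩
    · exact hA i
    · exact hB i
    · simp [map_sum, hA, hG]

lemma upper_prime (F : Type*) [Field F] (u r k l : ℕ)
    (hru : r < u) (hr : 2 ≤ r) (hk1 : 1 ≤ k) (hk2 : k ≤ r - 1)
    (hl1 : 1 ≤ l) (hl2 : l ≤ u - r) (P : Ideal (MvPolynomial (Vars u r) F)) (hP : P.IsPrime)
    (hI : Eset F u r k l ⊆ P) :
    ringKrullDim (MvPolynomial (Vars u r) F ⧸ P) ≤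
      ((4 * u - 3 * r - k - l : ℕ) : WithBot ℕ∞) := by
  classical
  set π := Ideal.Quotient.mk P with hπ
  have hE : ∀ p ∈ Eset F u r k l, π p = 0 := fun p hp =>
    Ideal.Quotient.eq_zero_iff_mem.mpr (hI hp)
  -- it suffices to find `p, q`
  suffices H : ∃ p q, 1 ≤ p ∧ 1 ≤ q ∧ p ≤ u ∧ q ≤ u - r ∧ p + q = k + l ∧
      ∀ v ∈ Sset u r p q, IsAlgebraic (Algebra.adjoin F
        ((fun v => π (MvPolynomial.X v)) '' (((Sset u r p q)ᶜ : Finset _) : Set (Vars u r))))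
        (π (MvPolynomial.X v)) by
    obtain ⟨p, q, h1, h2, h3, h4, h5, h6⟩ := H
    have := key P (Sset u r p q) h6
    rw [card_Sset u r p q h3 h4, card_Vars u r hru] at this
    have e : 4 * u - 3 * r - 2 - (p - 1 + (q - 1)) = 4 * u - 3 * r - k - l := by omega
    rwa [e] at this
  have hAX : ∀ i : Fin (u - 1), MvPolynomial.X (Sum.inl i) = Av F u r (i + 1) := by
    intro i; simp [Av]
  have hBX : ∀ i : Fin (u - r - 1),
      MvPolynomial.X (Sum.inr (Sum.inl i)) = Bv F u r (i + 1) := by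
    intro i; simp [Bv]
  by_cases h : k + l ≤ r
  · refine ⟨k, l, hk1, hl1, by omega, hl2, rfl, ?_⟩
    have hE' : ∀ p, _ → π p = 0 := hE
    simp only [Eset, if_pos h] at hE'
    intro v hv
    suffices hz : π (MvPolynomial.X v) = 0 by
      rw [hz]; exact isAlgebraic_zero
    rcases v with i | i | i | i
    · simp [Sset] at hv
      exact hE' _ (Or.inl ⟨i + 1, by omega, by omega, hAX i⟩)
    · simp [Sset] at hv
      exact hE' _ (Or.inr ⟨i + 1, by omega, by omega, hBX i⟩)
    · simp [Sset] at hv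
    · simp [Sset] at hv
  · have hE' : ∀ p, _ → π p = 0 := hE
    simp only [Eset, if_neg h] at hE'
    obtain ⟨i, hin, h0, h1⟩ := exists_order (fun j => π (Av F u r (k + j))) (k + l - r)
    have hA0 : ∀ j, 1 ≤ j → j < k + i → π (Av F u r j) = 0 := by
      intro j hj1 hj2
      rcases lt_or_ge j k with hjk | hjk
      · exact hE' _ (Or.inl (Or.inl ⟨j, hj1, by omega, rfl⟩))
      · have := h0 (j - k) (by omega)
        simpa [Nat.add_sub_cancel' hjk] using this
    refine ⟨k + i, l - i, by omega, by omega, by omega, by omega, by omega, ?_⟩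
    set T := ((fun v => π (MvPolynomial.X v)) ''
      (((Sset u r (k + i) (l - i))ᶜ : Finset _) : Set (Vars u r))) with hT
    let C : Subring (MvPolynomial (Vars u r) F ⧸ P) :=
      (Subalgebra.algebraicClosure (Algebra.adjoin F T)
        (MvPolynomial (Vars u r) F ⧸ P)).toSubring
    have hCmem : ∀ x, x ∈ C ↔ IsAlgebraic (Algebra.adjoin F T) x := fun x => Iff.rfl
    have hXT : ∀ v, v ∉ Sset u r (k + i) (l - i) → π (MvPolynomial.X v) ∈ C := by
      intro v hv
      have : π (MvPolynomial.X v) ∈ Algebra.adjoin F T :=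
        Algebra.subset_adjoin ⟨v, by simpa using hv, rfl⟩
      exact isAlgebraic_algebraMap (⟨_, this⟩ : Algebra.adjoin F T)
    have hAC : ∀ j, 1 ≤ j → π (Av F u r j) ∈ C := by
      intro j hj
      rcases lt_or_ge j (k + i) with hjk | hjk
      · rw [hA0 j hj hjk]; exact zero_mem _
      · unfold Av
        split_ifs with hh
        · refine hXT _ ?_
          simp [Sset]
          omega
        · rw [map_zero]; exact zero_mem _
    have hGC : ∀ j, π (Gv F u r j) ∈ C := by
      intro j
      unfold Gv
      split_ifs with hh
      · exact hXT _ (by simp [Sset])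
      · rw [map_zero]; exact zero_mem _
    have hHC : ∀ j, π (Hv F u r j) ∈ C := by
      intro j
      unfold Hv
      split_ifs with hh
      · exact hXT _ (by simp [Sset])
      · rw [map_zero]; exact zero_mem _
    have hBC := conv_mem C
      (fun x y hx hx0 hxy => by
        rw [hCmem] at hx hxy ⊢
        exact IsAlgebraic.of_mul (mem_nonZeroDivisors_of_ne_zero hx0) hx hxy)
      (fun j => π (Av F u r (k + j))) (fun j => π (Bv F u r (r - k + j))) i (k + l - r)
      h0 h1 (fun j => hAC _ (by omega))
      (by
        intro m hm
        have hz := hE' _ (Or.inr ⟨m, by omega, rfl⟩)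
        rw [map_sub, sub_eq_zero, map_sum, map_sum] at hz
        have e : ∑ j ∈ Finset.range (m + 1), π (Av F u r (k + j)) * π (Bv F u r (r - k + (m - j)))
            = ∑ j ∈ Finset.range (m + 1), π (Gv F u r j * Hv F u r (m - j)) := by
          rw [← hz]
          refine Finset.sum_congr rfl fun j hj => ?_
          rw [Finset.mem_range] at hj
          rw [map_mul, Nat.add_sub_assoc (by omega)]
        simp only [e]
        refine sum_mem fun j _ => ?_
        rw [map_mul]
        exact mul_mem (hGC _) (hHC _))
    intro v hv
    rw [← hCmem]
    rcases v with t | t | t | t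
    · rw [hAX]
      exact hAC _ (by omega)
    · simp [Sset] at hv
      rw [hBX]
      rcases lt_or_ge ((t : ℕ) + 1) (r - k) with ht | ht
      · rw [hE' _ (Or.inl (Or.inr ⟨t + 1, by omega, by omega, rfl⟩))]
        exact zero_mem _
      · have := hBC (t + 1 - (r - k)) (by omega)
        simpa only [Nat.add_sub_cancel' ht] using this
    · simp [Sset] at hv
    · simp [Sset] at hv

end S2

/-- `E^Q_{k,l}` consists of exactly `k+l−2` polynomials, and the quotient
of the polynomial ring in `N = 4u−3r−2` variables by the ideal generated by `E^Q_{k,l}`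
has Krull dimension `N − (k+l−2) = 4u−3r−k−l`; so the ideal is a complete intersection
ideal of height `k+l−2`. -/
theorem statement2 (F : Type*) [Field F] [Infinite F] (u r k l : ℕ)
    (hru : r < u) (hr : 2 ≤ r) (hk1 : 1 ≤ k) (hk2 : k ≤ r - 1)
    (hl1 : 1 ≤ l) (hl2 : l ≤ u - r) :
    (Eset F u r k l).ncard = k + l - 2 ∧
      ringKrullDim (MvPolynomial (Vars u r) F ⧸ Ideal.span (Eset F u r k l)) =
        ((4 * u - 3 * r - k - l : ℕ) : WithBot ℕ∞) := by
  classical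
  have hup : ringKrullDim (MvPolynomial (Vars u r) F ⧸ Ideal.span (Eset F u r k l)) ≤
      ((4 * u - 3 * r - k - l : ℕ) : WithBot ℕ∞) :=
    S2.dim_quot_le _ _ fun P hP hI =>
      S2.upper_prime F u r k l hru hr hk1 hk2 hl1 hl2 P hP (Ideal.span_le.mp hI)
  obtain ⟨hfin, hcard⟩ := S2.finite_card F u r k l hk1 hk2 hl1
  have hprime : (RingHom.ker (MvPolynomial.constantCoeff (σ := Vars u r) (R := F))).IsPrime :=
    RingHom.ker_isPrime _
  have hlow := Ideal.height_le_ringKrullDim_quotient_add_encard _ (S2.const_zero F u r k l)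
  have hN : (((4 * u - 3 * r - 2 : ℕ) : ℕ∞) : WithBot ℕ∞) ≤ _ :=
    (WithBot.coe_le_coe.mpr ((S2.card_Vars u r hru) ▸
      S2.height_origin (F := F) (σ := Vars u r))).trans hlow
  rw [← hfin.cast_ncard_eq] at hN
  generalize ringKrullDim (MvPolynomial (Vars u r) F ⧸ Ideal.span (Eset F u r k l)) = d at *
  generalize (Eset F u r k l).ncard = c at *
  induction d with
  | bot => simp at hN
  | coe d =>
    have hd : d ≤ ((4 * u - 3 * r - k - l : ℕ) : ℕ∞) := WithBot.coe_le_coe.mp hup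
    lift d to ℕ using ne_top_of_le_ne_top (ENat.natCast_ne_top _) hd
    have hd' : d ≤ 4 * u - 3 * r - k - l := by exact_mod_cast hd
    have hN' : 4 * u - 3 * r - 2 ≤ d + c := by exact_mod_cast hN
    refine ⟨by omega, ?_⟩
    have : d = 4 * u - 3 * r - k - l := by omega
    rw [this]
    rfl
end

section
/- Let F be a field and let u > r ≥ 1 be integers with u − r ≥ 1. Let a, g, h, b ∈ F[t] with deg a < u, deg g < u−r, deg h < u−r, deg b < u−r, and let M be the F-linear endomorphism of V = F[t]/(t^u) ⊕ t^r·F[t]/(t^u) given by M(v_1, v_2) = (a v_1 + g v_2, h t^r v_1 + b v_2). If a ≠ 0 and ord(a) ≤ r + min(ord(g), ord(h)), then dim_F ker(M) = min( ord(a·b − g·h·t^r), ord(a) + u − r ), where the order is taken in F[t] and ord(0) = +∞. -/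
open Polynomial

section Helpers

open Polynomial

lemma s3_dvd_iff {F : Type*} [Field F] (n : ℕ) (p : F[X]) :
    (X : F[X]) ^ n ∣ p ↔ (n : ℕ∞) ≤ p.trailingDegree := by
  constructor
  · rintro ⟨q, rfl⟩
    rw [trailingDegree_mul, trailingDegree_X_pow]
    exact le_self_add
  · intro h
    rw [X_pow_dvd_iff]
    intro d hd
    exact coeff_eq_zero_of_lt_trailingDegree (lt_of_lt_of_le (by exact_mod_cast hd) h)

lemma s3_ord {F : Type*} [Field F] (c : F[X]) (n : ℕ) :
    ∃ j : ℕ, j ≤ n ∧ (j : ℕ∞) = min c.trailingDegree n ∧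
      ∀ w : F[X], (X : F[X]) ^ n ∣ c * w ↔ (X : F[X]) ^ (n - j) ∣ w := by
  simp only [s3_dvd_iff, trailingDegree_mul]
  generalize c.trailingDegree = t
  induction t using ENat.recTopCoe with
  | top => exact ⟨n, le_rfl, by simp, by simp⟩
  | coe t =>
    refine ⟨min t n, min_le_right _ _, Nat.mono_cast.map_min, ?_⟩
    intro w
    generalize w.trailingDegree = s
    induction s using ENat.recTopCoe with
    | top => simp
    | coe s => norm_cast; omega

lemma s3_mk {F : Type*} [Field F] (n : ℕ) (x : F[X]) :
    (Submodule.Quotient.mk x : PQ F n) = 0 ↔ (X : F[X]) ^ n ∣ x := by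
  rw [Submodule.Quotient.mk_eq_zero, Ideal.mem_span_singleton]

lemma s3_mulQ {F : Type*} [Field F] (m m' : ℕ) (c : F[X]) (h) (x : F[X]) :
    mulQ F m m' c h (Submodule.Quotient.mk x) = Submodule.Quotient.mk (c * x) := rfl

lemma s3_finrank (F : Type*) [Field F] (n : ℕ) : Module.finrank F (PQ F n) = n := by
  rw [finrank_quotient_span_eq_natDegree, natDegree_X_pow]

lemma s3_finite (F : Type*) [Field F] (n : ℕ) : Module.Finite F (PQ F n) :=
  (monic_X_pow n).finite_quotient

lemma s3_cond (F : Type*) [Field F] {j n : ℕ} (hj : j ≤ n) :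
    (X : F[X]) ^ n ∣ X ^ (n - j) * X ^ j := by
  rw [← pow_add, Nat.sub_add_cancel hj]

lemma s3_inj (F : Type*) [Field F] {j n : ℕ} (hj : j ≤ n) :
    Function.Injective (mulQ F j n (X ^ (n - j)) (s3_cond F hj)) := by
  rw [injective_iff_map_eq_zero]
  intro x
  obtain ⟨x, rfl⟩ := Submodule.Quotient.mk_surjective _ x
  rw [s3_mulQ, s3_mk, s3_mk]
  intro h
  have : (X : F[X]) ^ n = X ^ (n - j) * X ^ j := by rw [← pow_add, Nat.sub_add_cancel hj]
  rw [this] at h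
  exact (mul_dvd_mul_iff_left (pow_ne_zero _ X_ne_zero)).1 h

lemma s3_mem_range (F : Type*) [Field F] {j n : ℕ} (hj : j ≤ n) (x : F[X]) :
    (Submodule.Quotient.mk x : PQ F n) ∈ LinearMap.range (mulQ F j n (X ^ (n - j)) (s3_cond F hj))
      ↔ (X : F[X]) ^ (n - j) ∣ x := by
  constructor
  · rintro ⟨y, hy⟩
    obtain ⟨y, rfl⟩ := Submodule.Quotient.mk_surjective _ y
    rw [s3_mulQ, ← sub_eq_zero, ← Submodule.Quotient.mk_sub, s3_mk] at hy
    have h1 := (pow_dvd_pow (X : F[X]) (Nat.sub_le n j)).trans hy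
    exact (dvd_sub_right (Dvd.intro _ rfl)).1 h1
  · rintro ⟨y, rfl⟩
    exact ⟨Submodule.Quotient.mk y, rfl⟩

lemma s3_mem_ker {F : Type*} [Field F] (u r : ℕ) (hru : r ≤ u) (a g h b x y : F[X]) :
    ((Submodule.Quotient.mk x : PQ F u), (Submodule.Quotient.mk y : PQ F (u - r))) ∈
      LinearMap.ker (Mmap F u r hru a g h b) ↔
      (X : F[X]) ^ u ∣ a * x + X ^ r * g * y ∧ (X : F[X]) ^ (u - r) ∣ h * x + b * y := by
  rw [← s3_mk, ← s3_mk, LinearMap.mem_ker, Prod.ext_iff]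
  rfl

end Helpers

/-- If `a ≠ 0` and `ord(a) ≤ r + min(ord g, ord h)`, then the kernel of
the endomorphism `M(v₁,v₂) = (a v₁ + g v₂, h t^r v₁ + b v₂)` of
`V = F[t]/(t^u) ⊕ t^r·F[t]/(t^u)` has dimension
`min( ord(a·b − g·h·t^r), ord(a) + u − r )`. -/
theorem statement3 (F : Type*) [Field F] (u r : ℕ) (hr : 1 ≤ r) (hru : r < u)
    (a g h b : F[X])
    (hda : a.degree < (u : ℕ)) (hdg : g.degree < ((u - r : ℕ)))
    (hdh : h.degree < ((u - r : ℕ))) (hdb : b.degree < ((u - r : ℕ)))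
    (ha0 : a ≠ 0)
    (hord : a.trailingDegree ≤ (r : ℕ∞) + min g.trailingDegree h.trailingDegree) :
    (Module.finrank F (LinearMap.ker (Mmap F u r hru.le a g h b)) : ℕ∞) =
      min (a * b - g * h * X ^ r).trailingDegree
        (a.trailingDegree + ((u - r : ℕ) : ℕ∞)) := by
  classical
  have := s3_finite F u
  have := s3_finite F (u - r)
  obtain ⟨k, hku, hk, hka⟩ := s3_ord a u
  have hak : a.trailingDegree = k := by
    have h1 : a.trailingDegree < u := by
      rw [trailingDegree_eq_natTrailingDegree ha0]
      rw [degree_eq_natDegree ha0] at hda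
      have := natTrailingDegree_le_natDegree a
      have h2 : a.natDegree < u := by exact_mod_cast hda
      exact_mod_cast lt_of_le_of_lt this h2
    rw [hk, min_eq_left h1.le]
  have hXk : (X : F[X]) ^ k ≠ 0 := pow_ne_zero _ X_ne_zero
  obtain ⟨a', ha'⟩ : (X : F[X]) ^ k ∣ a := (s3_dvd_iff _ _).2 hak.ge
  have ha't : a'.trailingDegree = 0 := by
    have h1 := hak
    rw [ha', trailingDegree_mul, trailingDegree_X_pow] at h1
    revert h1
    generalize a'.trailingDegree = t
    induction t using ENat.recTopCoe with
    | top => simp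
    | coe t => norm_cast; omega
  have hcop : ∀ n, IsCoprime a' ((X : F[X]) ^ n) := by
    intro n
    apply IsCoprime.pow_right
    apply IsCoprime.symm
    rw [irreducible_X.coprime_iff_not_dvd]
    intro hX
    rw [← pow_one (X : F[X]), s3_dvd_iff, ha't] at hX
    simp at hX
  have hg : (X : F[X]) ^ k ∣ X ^ r * g := by
    rw [s3_dvd_iff, trailingDegree_mul, trailingDegree_X_pow, ← hak]
    exact hord.trans (add_le_add le_rfl (min_le_left _ _))
  have hh : (X : F[X]) ^ k ∣ X ^ r * h := by
    rw [s3_dvd_iff, trailingDegree_mul, trailingDegree_X_pow, ← hak]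
    exact hord.trans (add_le_add le_rfl (min_le_right _ _))
  obtain ⟨g', hg'⟩ := hg
  have hhx : ∀ x, (X : F[X]) ^ (u - k) ∣ x → (X : F[X]) ^ (u - r) ∣ h * x := by
    rintro _ ⟨x, rfl⟩
    have h1 : (X : F[X]) ^ r * X ^ (u - r) ∣ X ^ r * (h * (X ^ (u - k) * x)) := by
      rw [← pow_add, Nat.add_sub_cancel' hru.le]
      obtain ⟨q, hq⟩ := hh
      refine ⟨q * x, ?_⟩
      have h2 : (X : F[X]) ^ u = X ^ k * X ^ (u - k) := by
        rw [← pow_add, Nat.add_sub_cancel' hku]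
      rw [h2]
      linear_combination (X ^ (u - k) * x) * hq
    exact (mul_dvd_mul_iff_left (pow_ne_zero _ X_ne_zero)).1 h1
  set D' := a' * b - g' * h with hD'
  have hD : a * b - g * h * X ^ r = X ^ k * D' := by
    rw [hD', ha']
    linear_combination (-h) * hg'
  obtain ⟨j, hj, hjm, hjw⟩ := s3_ord D' (u - r)
  have hu : (X : F[X]) ^ u = X ^ k * X ^ (u - k) := by
    rw [← pow_add, Nat.add_sub_cancel' hku]
  -- first equation
  have hfst : ∀ x y : F[X], (X : F[X]) ^ u ∣ a * x + X ^ r * g * y ↔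
      (X : F[X]) ^ (u - k) ∣ a' * x + g' * y := by
    intro x y
    have : a * x + X ^ r * g * y = X ^ k * (a' * x + g' * y) := by
      rw [hg', ha']; ring
    rw [this, hu, mul_dvd_mul_iff_left hXk]
  set K := LinearMap.ker (Mmap F u r hru.le a g h b) with hK
  let φ : K →ₗ[F] PQ F (u - r) := (LinearMap.snd F (PQ F u) (PQ F (u - r))).comp K.subtype
  have hrange : LinearMap.range φ =
      LinearMap.range (mulQ F j (u - r) (X ^ (u - r - j)) (s3_cond F hj)) := by
    ext w
    obtain ⟨y, rfl⟩ := Submodule.Quotient.mk_surjective _ w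
    rw [s3_mem_range F hj, ← hjw]
    constructor
    · rintro ⟨⟨⟨v, w⟩, hv⟩, hw⟩
      have hw : w = Submodule.Quotient.mk y := hw
      subst hw
      obtain ⟨x, rfl⟩ := Submodule.Quotient.mk_surjective _ v
      rw [hK, s3_mem_ker, hfst] at hv
      have h1 := hhx _ hv.1
      have h2 : D' * y = a' * (h * x + b * y) - h * (a' * x + g' * y) := by rw [hD']; ring
      rw [h2]
      exact dvd_sub (hv.2.mul_left _) h1
    · intro hy
      obtain ⟨e, f, hef⟩ := hcop u
      have hmem : ((Submodule.Quotient.mk (-(e * g' * y)) : PQ F u),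
          (Submodule.Quotient.mk y : PQ F (u - r))) ∈ K := by
        rw [hK, s3_mem_ker, hfst]
        have h1 : (X : F[X]) ^ (u - k) ∣ a' * (-(e * g' * y)) + g' * y := by
          refine (pow_dvd_pow (X : F[X]) (Nat.sub_le u k)).trans ⟨f * g' * y, ?_⟩
          linear_combination (-(g' * y)) * hef
        refine ⟨h1, ?_⟩
        refine (hcop (u - r)).symm.dvd_of_dvd_mul_left ?_
        have h2 : a' * (h * (-(e * g' * y)) + b * y) =
          D' * y + h * (a' * (-(e * g' * y)) + g' * y) := by rw [hD']; ring
        rw [h2]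
        exact dvd_add hy (hhx _ h1)
      exact ⟨⟨_, hmem⟩, rfl⟩
  have hker : (LinearMap.ker φ).map K.subtype =
      LinearMap.range ((LinearMap.inl F (PQ F u) (PQ F (u - r))).comp
        (mulQ F k u (X ^ (u - k)) (s3_cond F hku))) := by
    rw [LinearMap.range_comp]
    ext ⟨v, w⟩
    obtain ⟨x, rfl⟩ := Submodule.Quotient.mk_surjective _ v
    constructor
    · rintro ⟨⟨⟨v', w'⟩, hv⟩, hw, he⟩
      have hw : w' = 0 := hw
      have he : (v', w') = (Submodule.Quotient.mk x, w) := he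
      obtain ⟨h1, h2⟩ := Prod.mk.inj he
      subst h1 hw h2
      refine ⟨Submodule.Quotient.mk x, ?_, rfl⟩
      have hv : ((Submodule.Quotient.mk x : PQ F u),
        (Submodule.Quotient.mk 0 : PQ F (u - r))) ∈ K := hv
      rw [hK, s3_mem_ker] at hv
      have := hv.1
      rw [mul_zero, add_zero, hka] at this
      exact (s3_mem_range F hku x).2 this
    · rintro ⟨v', hv, he⟩
      have he : (v', (0 : PQ F (u - r))) = (Submodule.Quotient.mk x, w) := he
      obtain ⟨h1, h2⟩ := Prod.mk.inj he
      subst h1 h2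
      have hv := (s3_mem_range F hku x).1 hv
      have hmem : ((Submodule.Quotient.mk x : PQ F u),
        (Submodule.Quotient.mk 0 : PQ F (u - r))) ∈ K := by
        rw [hK, s3_mem_ker]
        simp only [mul_zero, add_zero]
        exact ⟨(hka x).2 hv, hhx x hv⟩
      exact ⟨⟨_, hmem⟩, rfl, rfl⟩
  have e1 : Module.finrank F (LinearMap.range φ) = j := by
    rw [hrange, LinearMap.finrank_range_of_inj (s3_inj F hj), s3_finrank]
  have e2 : Module.finrank F (LinearMap.ker φ) = k := by
    rw [← Submodule.finrank_map_subtype_eq, hker, LinearMap.finrank_range_of_inj, s3_finrank]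
    exact LinearMap.inl_injective.comp (s3_inj F hku)
  have e3 := LinearMap.finrank_range_add_finrank_ker φ
  rw [← e3, e1, e2, hD, trailingDegree_mul, trailingDegree_X_pow, hak, Nat.cast_add, hjm,
    add_comm, ← min_add_add_left]
end

section
/- Let F be an infinite field, let u > r ≥ 2 be integers, and let 1 ≤ k ≤ r−1 and 1 ≤ l ≤ u−r. A point x ∈ F^N lies in X^Q_{k,l} (i.e., every polynomial in E^Q_{k,l} vanishes at x) if and only if ord(a) ≥ k, ord(b) ≥ min(l, r−k), and ord(a·b − g·h·t^r) ≥ k+l, where a, b, g, h ∈ F[t] are the polynomials determined by x and ord(0) = +∞. -/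
open Polynomial

section Aux
open Polynomial

lemma aux_le_td {F : Type*} [Field F] (n : ℕ) (p : F[X]) :
    (n : ℕ∞) ≤ p.trailingDegree ↔ X ^ n ∣ p := by
  rw [X_pow_dvd_iff]
  constructor
  · intro h d hd
    exact coeff_eq_zero_of_lt_trailingDegree (lt_of_lt_of_le (by exact_mod_cast hd) h)
  · intro h
    refine Finset.le_min (fun i hi => ?_)
    by_contra hlt
    have h2 : i < n := by
      exact (Nat.cast_lt (α := ℕ∞)).mp (not_le.mp hlt)
    exact (mem_support_iff.mp hi) (h i h2)

lemma aux_coeff0 {F : Type*} [Field F] (n i : ℕ) (c : Fin n → F) :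
    (∑ j : Fin n, C (c j) * X ^ (j : ℕ)).coeff i = if h : i < n then c ⟨i, h⟩ else 0 := by
  rw [finsetSum_coeff]
  simp only [coeff_C_mul_X_pow]
  split_ifs with h
  · rw [Finset.sum_eq_single ⟨i, h⟩]
    · simp
    · intro b _ hb
      rw [if_neg]
      intro hi
      exact hb (Fin.ext hi.symm)
    · simp
  · apply Finset.sum_eq_zero
    intro b _
    rw [if_neg]
    have := b.2
    omega

lemma aux_coeff1 {F : Type*} [Field F] (n : ℕ) (c : Fin n → F) :
    (∑ j : Fin n, C (c j) * X ^ ((j : ℕ) + 1)) = X * ∑ j : Fin n, C (c j) * X ^ (j : ℕ) := by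
  rw [Finset.mul_sum]
  exact Finset.sum_congr rfl (fun j _ => by ring)

lemma aux_A (F : Type*) [Field F] (u r : ℕ) (x : Vars u r → F) (i : ℕ) (hi : 1 ≤ i) :
    MvPolynomial.eval x (Av F u r i) = (paOf F u r x).coeff i := by
  obtain ⟨i, rfl⟩ : ∃ j, i = j + 1 := ⟨i - 1, by omega⟩
  rw [paOf, aux_coeff1 (u - 1) (fun i => x (Sum.inl i)), coeff_X_mul,
    aux_coeff0 (u - 1) i (fun i => x (Sum.inl i)), Av]
  simp only [Nat.add_sub_cancel]
  split_ifs <;> simp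

lemma aux_B (F : Type*) [Field F] (u r : ℕ) (x : Vars u r → F) (i : ℕ) (hi : 1 ≤ i) :
    MvPolynomial.eval x (Bv F u r i) = (pbOf F u r x).coeff i := by
  obtain ⟨i, rfl⟩ : ∃ j, i = j + 1 := ⟨i - 1, by omega⟩
  rw [pbOf, aux_coeff1 (u - r - 1) (fun i => x (Sum.inr (Sum.inl i))), coeff_X_mul,
    aux_coeff0 (u - r - 1) i (fun i => x (Sum.inr (Sum.inl i))), Bv]
  simp only [Nat.add_sub_cancel]
  split_ifs <;> simp

lemma aux_G (F : Type*) [Field F] (u r : ℕ) (x : Vars u r → F) (i : ℕ) :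
    MvPolynomial.eval x (Gv F u r i) = (pgOf F u r x).coeff i := by
  rw [pgOf, aux_coeff0 (u - r) i (fun i => x (Sum.inr (Sum.inr (Sum.inl i)))), Gv]
  split_ifs <;> simp

lemma aux_H (F : Type*) [Field F] (u r : ℕ) (x : Vars u r → F) (i : ℕ) :
    MvPolynomial.eval x (Hv F u r i) = (phOf F u r x).coeff i := by
  rw [phOf, aux_coeff0 (u - r) i (fun i => x (Sum.inr (Sum.inr (Sum.inr i)))), Hv]
  split_ifs <;> simp

lemma aux_a0 (F : Type*) [Field F] (u r : ℕ) (x : Vars u r → F) :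
    (paOf F u r x).coeff 0 = 0 := by
  rw [paOf, aux_coeff1 (u - 1) (fun i => x (Sum.inl i))]; simp

lemma aux_b0 (F : Type*) [Field F] (u r : ℕ) (x : Vars u r → F) :
    (pbOf F u r x).coeff 0 = 0 := by
  rw [pbOf, aux_coeff1 (u - r - 1) (fun i => x (Sum.inr (Sum.inl i)))]; simp

lemma aux_dvdA (F : Type*) [Field F] (u r n : ℕ) (x : Vars u r → F) :
    X ^ n ∣ paOf F u r x ↔
      ∀ i, 1 ≤ i → i ≤ n - 1 → MvPolynomial.eval x (Av F u r i) = 0 := by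
  rw [X_pow_dvd_iff]
  constructor
  · intro h i h1 h2
    rw [aux_A F u r x i h1]
    exact h i (by omega)
  · intro h d hd
    rcases Nat.eq_zero_or_pos d with rfl | h0
    · exact aux_a0 F u r x
    · rw [← aux_A F u r x d h0]
      exact h d h0 (by omega)

lemma aux_dvdB (F : Type*) [Field F] (u r n : ℕ) (x : Vars u r → F) :
    X ^ n ∣ pbOf F u r x ↔
      ∀ i, 1 ≤ i → i ≤ n - 1 → MvPolynomial.eval x (Bv F u r i) = 0 := by
  rw [X_pow_dvd_iff]
  constructor
  · intro h i h1 h2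
    rw [aux_B F u r x i h1]
    exact h i (by omega)
  · intro h d hd
    rcases Nat.eq_zero_or_pos d with rfl | h0
    · exact aux_b0 F u r x
    · rw [← aux_B F u r x d h0]
      exact h d h0 (by omega)

lemma aux_mul {F : Type*} [Field F] (k s m : ℕ) (a b : F[X]) (ha : X ^ k ∣ a) (hb : X ^ s ∣ b) :
    (a * b).coeff (k + s + m) =
      ∑ j ∈ Finset.range (m + 1), a.coeff (k + j) * b.coeff (s + m - j) := by
  obtain ⟨a, rfl⟩ := ha
  obtain ⟨b, rfl⟩ := hb
  have : X ^ k * a * (X ^ s * b) = X ^ (k + s) * (a * b) := by ring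
  rw [this, add_comm (k + s) m, coeff_X_pow_mul, coeff_mul,
    Finset.Nat.sum_antidiagonal_eq_sum_range_succ (fun i j => a.coeff i * b.coeff j)]
  refine Finset.sum_congr rfl (fun j hj => ?_)
  have hj' := Finset.mem_range.mp hj
  rw [add_comm k j, coeff_X_pow_mul, show s + m - j = (m - j) + s by omega, coeff_X_pow_mul]

end Aux

/-- A point `x ∈ F^N` lies in `X^Q_{k,l}` if and only if `ord(a) ≥ k`,
`ord(b) ≥ min(l, r−k)` and `ord(a·b − g·h·t^r) ≥ k+l`, where `a, b, g, h` are the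
polynomials determined by `x` (and `ord 0 = +∞`). -/
theorem statement4 (F : Type*) [Field F] [Infinite F] (u r k l : ℕ)
    (hru : r < u) (hr : 2 ≤ r) (hk1 : 1 ≤ k) (hk2 : k ≤ r - 1)
    (hl1 : 1 ≤ l) (hl2 : l ≤ u - r) (x : Vars u r → F) :
    x ∈ Xlocus F u r k l ↔
      ((k : ℕ∞) ≤ (paOf F u r x).trailingDegree ∧
        ((min l (r - k) : ℕ) : ℕ∞) ≤ (pbOf F u r x).trailingDegree ∧
        ((k + l : ℕ) : ℕ∞) ≤
          (paOf F u r x * pbOf F u r x -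
            pgOf F u r x * phOf F u r x * X ^ r).trailingDegree) := by
  rw [aux_le_td, aux_le_td, aux_le_td]
  have hmem : x ∈ Xlocus F u r k l ↔ ∀ p ∈ Eset F u r k l, MvPolynomial.eval x p = 0 := Iff.rfl
  rw [hmem, Eset]
  split_ifs with hkl
  · rw [show min l (r - k) = l by omega, aux_dvdA, aux_dvdB]
    constructor
    · intro h
      have h1 : ∀ i, 1 ≤ i → i ≤ k - 1 → MvPolynomial.eval x (Av F u r i) = 0 :=
        fun i hi hi' => h _ (Or.inl ⟨i, hi, hi', rfl⟩)
      have h2 : ∀ i, 1 ≤ i → i ≤ l - 1 → MvPolynomial.eval x (Bv F u r i) = 0 :=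
        fun i hi hi' => h _ (Or.inr ⟨i, hi, hi', rfl⟩)
      refine ⟨h1, h2, dvd_sub ?_ ?_⟩
      · rw [pow_add]
        exact mul_dvd_mul ((aux_dvdA F u r k x).mpr h1) ((aux_dvdB F u r l x).mpr h2)
      · exact Dvd.dvd.mul_left (pow_dvd_pow _ hkl) _
    · rintro ⟨h1, h2, -⟩ p (⟨i, hi, hi', rfl⟩ | ⟨i, hi, hi', rfl⟩)
      · exact h1 i hi hi'
      · exact h2 i hi hi'
  · rw [show min l (r - k) = r - k by omega]
    have key : X ^ k ∣ paOf F u r x → X ^ (r - k) ∣ pbOf F u r x → ∀ m,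
        MvPolynomial.eval x
          ((∑ j ∈ Finset.range (m + 1), Av F u r (k + j) * Bv F u r (r - k + m - j)) -
          (∑ j ∈ Finset.range (m + 1), Gv F u r j * Hv F u r (m - j))) =
        (paOf F u r x * pbOf F u r x -
            pgOf F u r x * phOf F u r x * X ^ r).coeff (r + m) := by
      intro ha hb m
      have e := aux_mul k (r - k) m _ _ ha hb
      rw [show k + (r - k) + m = r + m by omega] at e
      rw [coeff_sub, e, add_comm r m, coeff_mul_X_pow, coeff_mul,
        Finset.Nat.sum_antidiagonal_eq_sum_range_succ
          (fun i j => (pgOf F u r x).coeff i * (phOf F u r x).coeff j),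
        map_sub, map_sum, map_sum]
      congr 1
      · refine Finset.sum_congr rfl (fun j hj => ?_)
        have hj' := Finset.mem_range.mp hj
        rw [map_mul, aux_A F u r x _ (by omega), aux_B F u r x _ (by omega)]
      · refine Finset.sum_congr rfl (fun j hj => ?_)
        rw [map_mul, aux_G, aux_H]
    constructor
    · intro h
      have h1 := (aux_dvdA F u r k x).mpr
        (fun i hi hi' => h _ (Or.inl (Or.inl ⟨i, hi, hi', rfl⟩)))
      have h2 := (aux_dvdB F u r (r - k) x).mpr
        (fun i hi hi' => h _ (Or.inl (Or.inr ⟨i, hi, hi', rfl⟩)))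
      refine ⟨h1, h2, ?_⟩
      rw [X_pow_dvd_iff]
      intro d hd
      by_cases hdr : d < r
      · have h3 : X ^ r ∣ paOf F u r x * pbOf F u r x -
            pgOf F u r x * phOf F u r x * X ^ r := by
          refine dvd_sub ?_ (Dvd.intro_left _ rfl)
          have := mul_dvd_mul h1 h2
          rwa [← pow_add, show k + (r - k) = r by omega] at this
        exact X_pow_dvd_iff.mp h3 d hdr
      · obtain ⟨m, rfl⟩ : ∃ m, d = r + m := ⟨d - r, by omega⟩
        rw [← key h1 h2 m]
        exact h _ (Or.inr ⟨m, by omega, rfl⟩)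
    · rintro ⟨h1, h2, h3⟩ p ((⟨i, hi, hi', rfl⟩ | ⟨i, hi, hi', rfl⟩) | ⟨m, hm, rfl⟩)
      · exact (aux_dvdA F u r k x).mp h1 i hi hi'
      · exact (aux_dvdB F u r (r - k) x).mp h2 i hi hi'
      · rw [key h1 h2 m]
        exact X_pow_dvd_iff.mp h3 _ (by omega)
end

section
/- Let F be a field, let k, l, r be natural numbers, and let M be a 2×2 matrix with entries in the formal power series ring F[[t]] such that ord(M_{1,1}) ≥ k, ord(M_{2,1}) ≥ r and ord(M_{2,2}) ≥ l (no condition on M_{1,2}). Then for every even integer s ≥ 2: ord((M^s)_{1,1}) ≥ min( s·k, (s/2)·r, (s−2)·l + r ); ord((M^s)_{1,2}) ≥ min( (s−1)·k, k + ((s−2)/2)·r, l + ((s−2)/2)·r, (s−1)·l ); ord((M^s)_{2,1}) ≥ min( (s−1)·k + r, k + (s/2)·r, l + (s/2)·r, (s−1)·l + r ); ord((M^s)_{2,2}) ≥ min( (s−2)·k + r, (s/2)·r, s·l ). -/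
open Polynomial

lemma ord_combo {F : Type*} [Field F] {f g f2 g2 : PowerSeries F} {a b a2 b2 c : ℕ}
    (hf : (a : ℕ∞) ≤ f.order) (hg : (b : ℕ∞) ≤ g.order)
    (hf2 : (a2 : ℕ∞) ≤ f2.order) (hg2 : (b2 : ℕ∞) ≤ g2.order)
    (h : c ≤ a + b) (h2 : c ≤ a2 + b2) :
    (c : ℕ∞) ≤ (f * g + f2 * g2).order := by
  refine le_trans (le_min ?_ ?_) (PowerSeries.min_order_le_order_add _ _)
  · rw [PowerSeries.order_mul]
    refine le_trans ?_ (add_le_add hf hg)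
    exact_mod_cast h
  · rw [PowerSeries.order_mul]
    refine le_trans ?_ (add_le_add hf2 hg2)
    exact_mod_cast h2

lemma even_aux (F : Type*) [Field F] (k l r : ℕ)
    (M : Matrix (Fin 2) (Fin 2) (PowerSeries F))
    (h11 : (k : ℕ∞) ≤ (M 0 0).order) (h21 : (r : ℕ∞) ≤ (M 1 0).order)
    (h22 : (l : ℕ∞) ≤ (M 1 1).order) (n : ℕ) :
    ((min (2 * (n * k) + 2 * k) (min (n * r + r) (2 * (n * l) + r)) : ℕ) : ℕ∞)
      ≤ ((M ^ (2 * n + 2)) 0 0).order ∧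
    ((min (2 * (n * k) + k) (min (k + n * r) (min (l + n * r) (2 * (n * l) + l))) : ℕ) : ℕ∞)
      ≤ ((M ^ (2 * n + 2)) 0 1).order ∧
    ((min (2 * (n * k) + k + r) (min (k + (n * r + r))
        (min (l + (n * r + r)) (2 * (n * l) + l + r))) : ℕ) : ℕ∞)
      ≤ ((M ^ (2 * n + 2)) 1 0).order ∧
    ((min (2 * (n * k) + r) (min (n * r + r) (2 * (n * l) + 2 * l)) : ℕ) : ℕ∞)
      ≤ ((M ^ (2 * n + 2)) 1 1).order := by
  have h12 : ((0 : ℕ) : ℕ∞) ≤ (M 0 1).order := by simp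
  have s11 : ((min (2 * k) r : ℕ) : ℕ∞) ≤ ((M ^ 2) 0 0).order := by
    rw [pow_two, Matrix.mul_apply, Fin.sum_univ_two]
    exact ord_combo h11 h11 h12 h21 (by omega) (by omega)
  have s12 : ((min k l : ℕ) : ℕ∞) ≤ ((M ^ 2) 0 1).order := by
    rw [pow_two, Matrix.mul_apply, Fin.sum_univ_two]
    exact ord_combo h11 h12 h12 h22 (by omega) (by omega)
  have s21 : ((min k l + r : ℕ) : ℕ∞) ≤ ((M ^ 2) 1 0).order := by
    rw [pow_two, Matrix.mul_apply, Fin.sum_univ_two]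
    exact ord_combo h21 h11 h22 h21 (by omega) (by omega)
  have s22 : ((min (2 * l) r : ℕ) : ℕ∞) ≤ ((M ^ 2) 1 1).order := by
    rw [pow_two, Matrix.mul_apply, Fin.sum_univ_two]
    exact ord_combo h21 h12 h22 h22 (by omega) (by omega)
  induction n with
  | zero =>
    simp only [mul_zero, zero_mul, zero_add, add_zero]
    refine ⟨le_trans (Nat.cast_le.2 ?_) s11, le_trans (Nat.cast_le.2 ?_) s12,
      le_trans (Nat.cast_le.2 ?_) s21, le_trans (Nat.cast_le.2 ?_) s22⟩ <;> omega
  | succ n ih =>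
    obtain ⟨i11, i12, i21, i22⟩ := ih
    have e : M ^ (2 * (n + 1) + 2) = M ^ (2 * n + 2) * M ^ 2 := by
      rw [← pow_add]; congr 1
    have hkr : (2 * k ≤ r ∧ 2 * (n * k) ≤ n * r) ∨ (r ≤ 2 * k ∧ n * r ≤ 2 * (n * k)) := by
      rcases le_total (2 * k) r with h | h
      · left; exact ⟨h, by nlinarith⟩
      · right; exact ⟨h, by nlinarith⟩
    have hlr : (2 * l ≤ r ∧ 2 * (n * l) ≤ n * r) ∨ (r ≤ 2 * l ∧ n * r ≤ 2 * (n * l)) := by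
      rcases le_total (2 * l) r with h | h
      · left; exact ⟨h, by nlinarith⟩
      · right; exact ⟨h, by nlinarith⟩
    have hkl : (k ≤ l ∧ n * k ≤ n * l) ∨ (l ≤ k ∧ n * l ≤ n * k) := by
      rcases le_total k l with h | h
      · left; exact ⟨h, by nlinarith⟩
      · right; exact ⟨h, by nlinarith⟩
    simp only [e, Matrix.mul_apply, Fin.sum_univ_two, add_mul, one_mul]
    generalize n * k = x at *
    generalize n * l = y at *
    generalize n * r = z at *
    refine ⟨ord_combo i11 s11 i12 s21 ?_ ?_, ord_combo i11 s12 i12 s22 ?_ ?_,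
      ord_combo i21 s11 i22 s21 ?_ ?_, ord_combo i21 s12 i22 s22 ?_ ?_⟩ <;>
    clear * - hkr hlr hkl <;>
    rcases hkr with hkr | hkr <;> rcases hlr with hlr | hlr <;>
    rcases hkl with hkl | hkl <;> omega

/-- even powers. Tropical lower bounds for the orders of the entries
of `M^s`, for `M` a `2×2` matrix over `F[[t]]` with `ord M₁₁ ≥ k`, `ord M₂₁ ≥ r`,
`ord M₂₂ ≥ l` and `s ≥ 2` even. -/
theorem statement5 (F : Type*) [Field F] (k l r : ℕ)
    (M : Matrix (Fin 2) (Fin 2) (PowerSeries F))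
    (h11 : (k : ℕ∞) ≤ (M 0 0).order) (h21 : (r : ℕ∞) ≤ (M 1 0).order)
    (h22 : (l : ℕ∞) ≤ (M 1 1).order)
    (s : ℕ) (hs2 : 2 ≤ s) (hse : Even s) :
    ((min (s * k) (min (s / 2 * r) ((s - 2) * l + r)) : ℕ) : ℕ∞) ≤ ((M ^ s) 0 0).order ∧
    ((min ((s - 1) * k) (min (k + (s - 2) / 2 * r)
        (min (l + (s - 2) / 2 * r) ((s - 1) * l))) : ℕ) : ℕ∞) ≤ ((M ^ s) 0 1).order ∧
    ((min ((s - 1) * k + r) (min (k + s / 2 * r)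
        (min (l + s / 2 * r) ((s - 1) * l + r))) : ℕ) : ℕ∞) ≤ ((M ^ s) 1 0).order ∧
    ((min ((s - 2) * k + r) (min (s / 2 * r) (s * l)) : ℕ) : ℕ∞) ≤ ((M ^ s) 1 1).order := by
  obtain ⟨n, rfl⟩ : ∃ n, s = 2 * n + 2 := by
    obtain ⟨m, hm⟩ := hse
    exact ⟨m - 1, by omega⟩
  have e1 : (2 * n + 2) / 2 = n + 1 := by omega
  have e2 : 2 * n + 2 - 2 = 2 * n := by omega
  have e3 : 2 * n + 2 - 1 = 2 * n + 1 := by omega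
  have e4 : 2 * n / 2 = n := by omega
  have := even_aux F k l r M h11 h21 h22 n
  rw [e1, e2, e3, e4]
  simp only [add_mul, one_mul, mul_assoc]
  exact this
end

section
/- Let F be a field, let k, l, r be natural numbers, and let M be a 2×2 matrix with entries in the formal power series ring F[[t]] such that ord(M_{1,1}) ≥ k, ord(M_{2,1}) ≥ r and ord(M_{2,2}) ≥ l (no condition on M_{1,2}). Then for every odd integer s ≥ 3: ord((M^s)_{1,1}) ≥ min( s·k, k + ((s−1)/2)·r, l + ((s−1)/2)·r, (s−2)·l + r ); ord((M^s)_{1,2}) ≥ min( (s−1)·k, ((s−1)/2)·r, (s−1)·l ); ord((M^s)_{2,1}) ≥ min( (s−1)·k + r, ((s+1)/2)·r, (s−1)·l + r ); ord((M^s)_{2,2}) ≥ min( (s−2)·k + r, k + ((s−1)/2)·r, l + ((s−1)/2)·r, s·l ). -/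
open Polynomial

theorem s6_aux (F : Type*) [Field F] (k l r : ℕ)
    (M : Matrix (Fin 2) (Fin 2) (PowerSeries F))
    (h11 : (PowerSeries.X : PowerSeries F) ^ k ∣ M 0 0)
    (h21 : (PowerSeries.X : PowerSeries F) ^ r ∣ M 1 0)
    (h22 : (PowerSeries.X : PowerSeries F) ^ l ∣ M 1 1) (n : ℕ) :
    (∀ N : ℕ, (∀ x y c : ℕ, x + y + 2 * c = n → (1 ≤ c ∨ y = 0) → N ≤ x * k + y * l + c * r) →
      (PowerSeries.X : PowerSeries F) ^ N ∣ (M ^ n) 0 0) ∧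
    (∀ N : ℕ, (∀ x y c : ℕ, x + y + 2 * c + 1 = n → N ≤ x * k + y * l + c * r) →
      (PowerSeries.X : PowerSeries F) ^ N ∣ (M ^ n) 0 1) ∧
    (∀ N : ℕ, (∀ x y c : ℕ, x + y + 2 * c + 1 = n → N ≤ x * k + y * l + (c + 1) * r) →
      (PowerSeries.X : PowerSeries F) ^ N ∣ (M ^ n) 1 0) ∧
    (∀ N : ℕ, (∀ x y c : ℕ, x + y + 2 * c = n → (1 ≤ c ∨ x = 0) → N ≤ x * k + y * l + c * r) →
      (PowerSeries.X : PowerSeries F) ^ N ∣ (M ^ n) 1 1) := by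
  have key : ∀ (N a : ℕ) (p q : PowerSeries F), PowerSeries.X ^ (N - a) ∣ p →
      PowerSeries.X ^ a ∣ q → PowerSeries.X ^ N ∣ p * q := by
    intro N a p q hp hq
    refine (pow_dvd_pow _ (by omega : N ≤ (N - a) + a)).trans ?_
    rw [pow_add]
    exact mul_dvd_mul hp hq
  induction n with
  | zero =>
    refine ⟨fun N h => ?_, fun N h => ?_, fun N h => ?_, fun N h => ?_⟩
    · have := h 0 0 0 (by simp) (by simp)
      simp at this; simp [this]
    · simp
    · simp
    · have := h 0 0 0 (by simp) (by simp)
      simp at this; simp [this]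
  | succ n ih =>
    obtain ⟨i00, i01, i10, i11⟩ := ih
    simp only [pow_succ M n, Matrix.mul_apply, Fin.sum_univ_two]
    refine ⟨fun N h => dvd_add (key N k _ _ (i00 _ ?_) h11) (key N r _ _ (i01 _ ?_) h21),
      fun N h => dvd_add (Dvd.dvd.mul_right (i00 _ ?_) _) (key N l _ _ (i01 _ ?_) h22),
      fun N h => dvd_add (key N k _ _ (i10 _ ?_) h11) (key N r _ _ (i11 _ ?_) h21),
      fun N h => dvd_add (Dvd.dvd.mul_right (i10 _ ?_) _) (key N l _ _ (i11 _ ?_) h22)⟩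
    · intro x y c hn hc
      have := h (x + 1) y c (by omega) hc
      rw [add_mul] at this; omega
    · intro x y c hn
      have := h x y (c + 1) (by omega) (by omega)
      rw [add_mul c] at this; omega
    · intro x y c hn hc
      exact h x y c (by omega)
    · intro x y c hn
      have := h x (y + 1) c (by omega)
      rw [add_mul y] at this; omega
    · intro x y c hn
      have := h (x + 1) y c (by omega)
      rw [add_mul x] at this; omega
    · intro x y c hn hc
      have := h x y c (by omega)
      rw [add_mul c] at this; omega
    · intro x y c hn
      exact h x y (c + 1) (by omega) (by omega)
    · intro x y c hn hc
      have := h x (y + 1) c (by omega) (by omega)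
      rw [add_mul y] at this; omega

theorem s6_diag (k l r m N x y c : ℕ)
    (h1 : N ≤ (2 * m + 1) * k) (h2 : N ≤ k + m * r) (h3 : N ≤ l + m * r)
    (h4 : N ≤ (2 * m - 1) * l + r)
    (hn : x + y + 2 * c = 2 * m + 1) (hc : 1 ≤ c ∨ y = 0) :
    N ≤ x * k + y * l + c * r := by
  rcases Nat.eq_zero_or_pos c with rfl | hc
  · obtain rfl : y = 0 := by omega
    obtain rfl : x = 2 * m + 1 := by omega
    omega
  obtain ⟨d, rfl⟩ : ∃ d, c = d + 1 := ⟨c - 1, by omega⟩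
  obtain ⟨e, rfl⟩ : ∃ e, m = d + 1 + e := ⟨m - d - 1, by omega⟩
  rw [show 2 * (d + 1 + e) - 1 = 2 * d + 1 + 2 * e by omega] at h4
  have hxy : x + y = 2 * e + 1 := by omega
  rcases le_total k l with hkl | hkl
  · have : (2 * e + 1) * k ≤ x * k + y * l := by rw [← hxy]; nlinarith
    rcases le_total r (2 * k) with hr | hr <;> nlinarith
  · have : (2 * e + 1) * l ≤ x * k + y * l := by rw [← hxy]; nlinarith
    rcases le_total r (2 * l) with hr | hr <;> nlinarith

theorem s6_off (k l r m N x y c : ℕ)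
    (h1 : N ≤ 2 * m * k) (h2 : N ≤ m * r) (h3 : N ≤ 2 * m * l)
    (hn : x + y + 2 * c = 2 * m) :
    N ≤ x * k + y * l + c * r := by
  obtain ⟨e, rfl⟩ : ∃ e, m = c + e := ⟨m - c, by omega⟩
  have hxy : x + y = 2 * e := by omega
  rcases le_total k l with hkl | hkl
  · have : (2 * e) * k ≤ x * k + y * l := by rw [← hxy]; nlinarith
    rcases le_total r (2 * k) with hr | hr <;> nlinarith
  · have : (2 * e) * l ≤ x * k + y * l := by rw [← hxy]; nlinarith
    rcases le_total r (2 * l) with hr | hr <;> nlinarith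

/-- odd powers. Tropical lower bounds for the orders of the entries
of `M^s`, for `M` a `2×2` matrix over `F[[t]]` with `ord M₁₁ ≥ k`, `ord M₂₁ ≥ r`,
`ord M₂₂ ≥ l` and `s ≥ 3` odd. -/
theorem statement6 (F : Type*) [Field F] (k l r : ℕ)
    (M : Matrix (Fin 2) (Fin 2) (PowerSeries F))
    (h11 : (k : ℕ∞) ≤ (M 0 0).order) (h21 : (r : ℕ∞) ≤ (M 1 0).order)
    (h22 : (l : ℕ∞) ≤ (M 1 1).order)
    (s : ℕ) (hs3 : 3 ≤ s) (hso : Odd s) :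
    ((min (s * k) (min (k + (s - 1) / 2 * r)
        (min (l + (s - 1) / 2 * r) ((s - 2) * l + r))) : ℕ) : ℕ∞) ≤ ((M ^ s) 0 0).order ∧
    ((min ((s - 1) * k) (min ((s - 1) / 2 * r) ((s - 1) * l)) : ℕ) : ℕ∞) ≤
        ((M ^ s) 0 1).order ∧
    ((min ((s - 1) * k + r) (min ((s + 1) / 2 * r) ((s - 1) * l + r)) : ℕ) : ℕ∞) ≤
        ((M ^ s) 1 0).order ∧
    ((min ((s - 2) * k + r) (min (k + (s - 1) / 2 * r)
        (min (l + (s - 1) / 2 * r) (s * l))) : ℕ) : ℕ∞) ≤ ((M ^ s) 1 1).order := by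
  have hX : ∀ (n : ℕ) (p : PowerSeries F), (n : ℕ∞) ≤ p.order ↔ PowerSeries.X ^ n ∣ p := by
    intro n p
    rw [PowerSeries.X_pow_dvd_iff]
    constructor
    · intro h i hi
      exact PowerSeries.coeff_of_lt_order i (lt_of_lt_of_le (by exact_mod_cast hi) h)
    · intro h
      exact PowerSeries.nat_le_order p n h
  simp only [hX] at h11 h21 h22 ⊢
  obtain ⟨i00, i01, i10, i11⟩ := s6_aux F k l r M h11 h21 h22 s
  obtain ⟨m, rfl⟩ := hso
  have e1 : (2 * m + 1 - 1) / 2 = m := by omega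
  have e2 : (2 * m + 1 + 1) / 2 = m + 1 := by omega
  have e3 : 2 * m + 1 - 1 = 2 * m := by omega
  have e4 : 2 * m + 1 - 2 = 2 * m - 1 := by omega
  simp only [e1, e2, e4]
  simp only [e3]
  refine ⟨i00 _ ?_, i01 _ ?_, i10 _ ?_, i11 _ ?_⟩
  · intro x y c hn hc
    exact s6_diag k l r m _ x y c (by omega) (by omega) (by omega) (by omega) hn hc
  · intro x y c hn
    exact s6_off k l r m _ x y c (by omega) (by omega) (by omega) (by omega)
  · intro x y c hn
    have := s6_off k l r m
      (min (2 * m * k + r) (min ((m + 1) * r) (2 * m * l + r)) - r) x y c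
      (by omega) (by rw [add_mul]; omega) (by omega) (by omega)
    rw [add_mul c]
    omega
  · intro x y c hn hc
    have := s6_diag l k r m
      (min ((2 * m - 1) * k + r) (min (k + m * r) (min (l + m * r) ((2 * m + 1) * l)))) y x c
      (by omega) (by omega) (by omega) (by omega) (by omega) hc
    omega
end
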